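/- arXiv:1512.02670 — 2 statements merged into one kernel-verified Lean document; each statement's English description precedes it below -/
import Mathlib

section
/- There exists an absolute constant c > 0 such that the following holds. Let P be a finite set of N points in ℝ² \ {0} which is not contained in a single line through the origin. Then |T(P)| ≥ c·N^(9/13). -/
open Finset
open scoped Classical

/-- The standard non-degenerate skew-symmetric bilinear form on `ℝ²`. -/
noncomputable def omegaForm (q q' : ℝ × ℝ) : ℝ := q.1 * q'.2 - q.2 * q'.1

/-- `T(P)`: the set of nonzero values of `ω` on `P × P`. -/
noncomputable def Tset (P : Finset (ℝ × ℝ)) : Finset ℝ :=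
  ((P ×ˢ P).image fun qq => omegaForm qq.1 qq.2).erase 0

/-!
Write `N = |P|`, `T = |T(P)|`, and let `D` be the number of lines through the origin meeting `P`.
A shear preserves `ω` and makes all second coordinates nonzero; then
`ω(p, q) = p.2 * q.2 * (s - t)` for points `p`, `q` of slopes `s = p.1 / p.2` and `t = q.1 / q.2`.

* Along each of its own slopes `P` has at most `T + 1` distinct projections. If `N` is large
  compared with `T`, the orders of the projections along two consecutive slopes have many
  inversions, while a pair of points is inverted for at most one pair of consecutive slopes. This
  gives `N D ≲ T²`.
* Let `R` be a set of `k` slopes, each carrying at least `n` points of `P`. For points `p₀, …, p₃`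
  of different slopes in `R`, the relation `ω₀₁ ω₂₃ + ω₁₂ ω₀₃ = ω₀₂ ω₁₃` divided by `ω₀₃` is an
  incidence of the point `(ω₀₁, ω₁₂)` with the line of parameters `ω₂₃ / ω₀₃` and `ω₀₂ ω₁₃ / ω₀₃`.
  These have `n` and `n²` representations by values of `ω`, so there are at most `T⁵ / n³` lines.
  The incidence determines the cross ratio of the slopes, each cross ratio comes from at least
  `n²` incidences, and `k` reals have `≳ k²` cross ratios. An incidence bound for lines in a grid
  gives `n⁶ k³ ≲ T⁷`.
* Summing over the level sets of the number of points per slope gives `N² ≲ T^(7/3) D`; together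
  with `N D ≲ T²` this is `N⁹ ≲ T¹³`.

Both the incidence bound and the count of cross ratios, whose coincidences are quadruples of
points on graphs of Möbius transformations, come from cutting a grid into cells: a monotone curve
meets few cells, and the tuples of points lying in a common cell are few.
-/

/-! ### Counting tuples, fibres and level sets -/

section Counting

variable {ι κ γ : Type*}

theorem sum_card_le_card_of_pairwiseDisjoint {L : Finset κ} {F : κ → Finset ι} {B : Finset ι}
    (hdisj : (L : Set κ).PairwiseDisjoint F) (hF : ∀ l ∈ L, F l ⊆ B) :
    ∑ l ∈ L, #(F l) ≤ #B := by
  rw [← card_biUnion hdisj]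
  exact card_le_card (biUnion_subset.2 hF)

theorem card_sq_le_card_image_mul [DecidableEq γ] (G : Finset ι) (f : ι → γ) :
    #G ^ 2 ≤ #(G.image f) * #{e ∈ G ×ˢ G | f e.1 = f e.2} := by
  have hpairs : #{e ∈ G ×ˢ G | f e.1 = f e.2} = ∑ y ∈ G.image f, #{a ∈ G | f a = y} ^ 2 := by
    rw [card_eq_sum_card_fiberwise (f := fun e => f e.1) (t := G.image f)]
    · refine sum_congr rfl fun y _ => ?_
      rw [sq, ← card_product]
      congr 1
      ext e
      simp only [mem_filter, mem_product]
      grind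
    · intro e he
      exact mem_image_of_mem f (mem_product.1 (mem_filter.1 he).1).1
  rw [hpairs, card_eq_sum_card_image f G]
  exact sq_sum_le_card_mul_sum_sq

/-- The values which `f` takes at least `m` times on `B`. -/
noncomputable def richValues [DecidableEq γ] (f : ι → γ) (B : Finset ι) (m : ℕ) : Finset γ :=
  {y ∈ B.image f | m ≤ #{b ∈ B | f b = y}}

theorem mem_richValues_of_le_card [DecidableEq γ] {f : ι → γ} {B : Finset ι} {m : ℕ} {b : ι}
    (hb : b ∈ B) (hm : m ≤ #{b' ∈ B | f b' = f b}) : f b ∈ richValues f B m :=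
  mem_filter.2 ⟨mem_image_of_mem f hb, hm⟩

theorem mul_card_richValues_le [DecidableEq γ] (f : ι → γ) (B : Finset ι) (m : ℕ) :
    m * #(richValues f B m) ≤ #B := by
  rw [card_eq_sum_card_image f B, mul_comm, ← smul_eq_mul]
  exact (card_nsmul_le_sum _ _ _ fun y hy => (mem_filter.1 hy).2).trans
    (sum_le_sum_of_subset (filter_subset _ _))

/-- The `k`-tuples of distinct elements of `G`. -/
noncomputable def injTuples (k : ℕ) (G : Finset ι) : Finset (Fin k → ι) :=
  {e ∈ Fintype.piFinset fun _ => G | Function.Injective e}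

theorem mem_injTuples {k : ℕ} {G : Finset ι} {e : Fin k → ι} :
    e ∈ injTuples k G ↔ (∀ i, e i ∈ G) ∧ Function.Injective e := by
  simp [injTuples]

theorem descFactorial_le_card_injTuples (k : ℕ) (G : Finset ι) :
    (#G).descFactorial k ≤ #(injTuples k G) := by
  have hcard : Fintype.card (Fin k ↪ G) = (#G).descFactorial k := by simp
  rw [← hcard, ← card_univ]
  refine card_le_card_of_injOn (fun e i => (e i : ι)) (fun e _ => ?_) fun e _ e' _ h => ?_
  · exact mem_injTuples.2 ⟨fun i => (e i).2, Subtype.val_injective.comp e.injective⟩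
  · exact DFunLike.ext _ _ fun i => Subtype.ext (congrFun h i)

theorem card_le_add_card_injTuples (k : ℕ) (G : Finset ι) : #G ≤ k + #(injTuples (k + 1) G) := by
  rcases le_or_gt #G k with hk | hk
  · omega
  have hpos : 0 < (#G).descFactorial k := Nat.descFactorial_pos.2 hk.le
  have hcount := descFactorial_le_card_injTuples (k + 1) G
  rw [Nat.descFactorial_succ] at hcount
  have := Nat.le_mul_of_pos_right (#G - k) hpos
  omega

/-- The `(k + 1)`-tuples of distinct elements of `G` on which `h` is constant. -/
noncomputable def constTuples (h : ι → γ) (k : ℕ) (G : Finset ι) : Finset (Fin (k + 1) → ι) :=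
  {e ∈ injTuples (k + 1) G | ∀ i, h (e i) = h (e 0)}

theorem constTuples_subset_injTuples (h : ι → γ) (k : ℕ) (G : Finset ι) :
    constTuples h k G ⊆ injTuples (k + 1) G :=
  filter_subset _ _

theorem mem_constTuples {h : ι → γ} {k : ℕ} {G : Finset ι} {e : Fin (k + 1) → ι} :
    e ∈ constTuples h k G ↔
      (∀ i, e i ∈ G) ∧ Function.Injective e ∧ ∀ i, h (e i) = h (e 0) := by
  rw [constTuples, mem_filter, mem_injTuples, and_assoc]

theorem card_le_mul_card_image_add_card_constTuples [DecidableEq γ] (G : Finset ι) (h : ι → γ)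
    (k : ℕ) : #G ≤ k * #(G.image h) + #(constTuples h k G) := by
  have hfibre : ∀ y ∈ G.image h,
      #{a ∈ G | h a = y} ≤ k + #{e ∈ constTuples h k G | h (e 0) = y} := by
    refine fun y _ => (card_le_add_card_injTuples k _).trans ?_
    gcongr
    intro e he
    simp only [mem_injTuples, mem_filter] at he
    refine mem_filter.2 ⟨mem_constTuples.2 ⟨fun i => (he.1 i).1, he.2, fun i => ?_⟩, (he.1 0).2⟩
    rw [(he.1 i).2, (he.1 0).2]
  have hmaps : ∀ e ∈ constTuples h k G, h (e 0) ∈ G.image h := fun e he =>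
    mem_image_of_mem h ((mem_constTuples.1 he).1 0)
  calc #G = ∑ y ∈ G.image h, #{a ∈ G | h a = y} := card_eq_sum_card_image h G
    _ ≤ ∑ y ∈ G.image h, (k + #{e ∈ constTuples h k G | h (e 0) = y}) := sum_le_sum hfibre
    _ = k * #(G.image h) + #(constTuples h k G) := by
      rw [sum_add_distrib, sum_const, smul_eq_mul, mul_comm, ← card_eq_sum_card_fiberwise hmaps]

theorem sum_le_card_mul_add_sum_card_superlevel (S : Finset ι) (f : ι → ℕ) (m : ℕ) :
    ∑ s ∈ S, f s ≤ #S * m + ∑ n ∈ Ioo m (S.sup f + 1), #{s ∈ S | n ≤ f s} := by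
  have hlayer : ∀ s ∈ S, f s ≤ m + #{n ∈ Ioo m (S.sup f + 1) | n ≤ f s} := by
    intro s hs
    have hsup : f s ≤ S.sup f := le_sup hs
    have hIoc : {n ∈ Ioo m (S.sup f + 1) | n ≤ f s} = Ioc m (f s) := by
      ext n
      simp only [mem_filter, mem_Ioo, mem_Ioc]
      omega
    rw [hIoc, Nat.card_Ioc]
    omega
  calc ∑ s ∈ S, f s ≤ ∑ s ∈ S, (m + #{n ∈ Ioo m (S.sup f + 1) | n ≤ f s}) := sum_le_sum hlayer
    _ = _ := by
      simp only [sum_add_distrib, sum_const, smul_eq_mul, card_filter]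
      rw [sum_comm]

theorem sum_Ioo_card_superlevel_le {S : Finset ι} {f : ι → ℕ} {B : ℝ}
    (hB : ∀ n : ℕ, 1 ≤ n → (n : ℝ) ^ 2 * #{s ∈ S | n ≤ f s} ≤ B) (m M : ℕ) :
    ∑ n ∈ Ioo m M, (#{s ∈ S | n ≤ f s} : ℝ) ≤ B * (2 / (m + 1)) := by
  have hB0 : 0 ≤ B := le_trans (by positivity) (hB 1 le_rfl)
  calc ∑ n ∈ Ioo m M, (#{s ∈ S | n ≤ f s} : ℝ) ≤ ∑ n ∈ Ioo m M, B * ((n : ℝ) ^ 2)⁻¹ := by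
        refine sum_le_sum fun n hn => ?_
        have hn : 0 < n := by have := mem_Ioo.1 hn; omega
        rw [← div_eq_mul_inv, le_div_iff₀ (by positivity), mul_comm]
        exact hB n hn
    _ ≤ B * (2 / (m + 1)) := by
      rw [← mul_sum]
      gcongr
      exact sum_Ioo_inv_sq_le m M

theorem sum_sq_le_of_card_superlevel_le {S : Finset ι} {f : ι → ℕ} {B : ℝ}
    (hB : ∀ n : ℕ, 1 ≤ n → (n : ℝ) ^ 2 * #{s ∈ S | n ≤ f s} ≤ B) :
    ((∑ s ∈ S, f s : ℕ) : ℝ) ^ 2 ≤ 8 * B * #S := by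
  have hB0 : 0 ≤ B := le_trans (by positivity) (hB 1 le_rfl)
  obtain ⟨N, hN⟩ : ∃ N : ℝ, N = ((∑ s ∈ S, f s : ℕ) : ℝ) := ⟨_, rfl⟩
  have hN_nonneg : 0 ≤ N := hN ▸ Nat.cast_nonneg _
  rw [← hN]
  rcases hN_nonneg.eq_or_lt with hN0 | hN0
  · rw [← hN0, zero_pow two_ne_zero]
    positivity
  have hS0 : (0 : ℝ) < #S := by
    rw [Nat.cast_pos, card_pos, nonempty_iff_ne_empty]
    rintro rfl
    simp [hN] at hN0
  -- The layers below half of the average value of `f` carry at most half of the sum.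
  set m := ⌊N / (2 * #S)⌋₊ with hm
  have hm_le : (m : ℝ) * (2 * #S) ≤ N :=
    (le_div_iff₀ (by positivity)).1 (Nat.floor_le (by positivity))
  have hm_lt : N < (m + 1) * (2 * #S) :=
    (div_lt_iff₀ (by positivity)).1 (Nat.lt_floor_add_one _)
  have hlayers : N ≤ #S * m + ∑ n ∈ Ioo m (S.sup f + 1), (#{s ∈ S | n ≤ f s} : ℝ) := by
    rw [hN]
    exact_mod_cast sum_le_card_mul_add_sum_card_superlevel S f m
  have htail := sum_Ioo_card_superlevel_le hB m (S.sup f + 1)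
  have hhalf : N * (m + 1) ≤ 4 * B := by
    rw [mul_div_assoc'] at htail
    have := (le_div_iff₀ (by positivity : (0 : ℝ) < m + 1)).1
      (show N / 2 ≤ B * 2 / (m + 1) by linarith)
    linarith
  calc N ^ 2 = N * N := sq N
    _ ≤ N * ((m + 1) * (2 * #S)) := by gcongr
    _ = N * (m + 1) * (2 * #S) := by ring
    _ ≤ 4 * B * (2 * #S) := by gcongr
    _ = 8 * B * #S := by ring

end Counting

/-! ### Cutting a grid into cells -/

section Cells

variable {α β κ : Type*} [LinearOrder α] [LinearOrder β]

/-- The number of elements of `A` below `x`: the position of `x` in the increasing enumeration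
of `A`, counted from `0`. -/
def rankIn (A : Finset α) (x : α) : ℕ := #{y ∈ A | y < x}

theorem rankIn_mono (A : Finset α) : Monotone (rankIn A) := fun _ _ hxy =>
  card_le_card (monotone_filter_right A fun _ _ hz => hz.trans_le hxy)

theorem rankIn_strictMonoOn (A : Finset α) : StrictMonoOn (rankIn A) A := by
  intro x hx y _ hxy
  refine card_lt_card ⟨monotone_filter_right A fun _ _ hz => hz.trans hxy, fun hsub => ?_⟩
  exact lt_irrefl x (mem_filter.1 (hsub (mem_filter.2 ⟨hx, hxy⟩))).2

theorem rankIn_lt_card {A : Finset α} {x : α} (hx : x ∈ A) : rankIn A x < #A :=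
  card_lt_card (filter_ssubset.2 ⟨x, hx, lt_irrefl x⟩)

/-- The index of the block containing `x` when `A` is cut, in increasing order, into blocks of
`g` elements. -/
def blockIndex (A : Finset α) (g : ℕ) (x : α) : ℕ := rankIn A x / g

theorem blockIndex_mono (A : Finset α) (g : ℕ) : Monotone (blockIndex A g) := fun _ _ hxy =>
  Nat.div_le_div_right (rankIn_mono A hxy)

theorem blockIndex_lt {A : Finset α} {g r : ℕ} (hA : #A ≤ r * g) {x : α} (hx : x ∈ A) :
    blockIndex A g x < r :=
  Nat.div_lt_of_lt_mul ((rankIn_lt_card hx).trans_le (mul_comm r g ▸ hA))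

theorem card_block_le (A : Finset α) {g : ℕ} (hg : 0 < g) (b : ℕ) :
    #{y ∈ A | blockIndex A g y = b} ≤ g := by
  calc #{y ∈ A | blockIndex A g y = b} ≤ #(Ico (b * g) (b * g + g)) := by
        refine card_le_card_of_injOn (rankIn A) (fun y hy => ?_)
          ((rankIn_strictMonoOn A).injOn.mono fun y hy => (mem_filter.1 hy).1)
        have hy := (Nat.div_eq_iff hg).1 (mem_filter.1 hy).2
        simp only [coe_Ico, Set.mem_Ico]
        omega
    _ = g := by simp

theorem card_tuples_in_block_le (A : Finset α) {g : ℕ} (hg : 0 < g) (k : ℕ) :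
    #{e ∈ Fintype.piFinset fun _ : Fin (k + 1) => A |
      ∀ i, blockIndex A g (e i) = blockIndex A g (e 0)} ≤ g ^ k * #A := by
  refine card_le_mul_card_image_of_maps_to (f := fun e => e 0)
    (fun e he => Fintype.mem_piFinset.1 (mem_filter.1 he).1 0) _ fun x _ => ?_
  let block := {y ∈ A | blockIndex A g y = blockIndex A g x}
  calc _ ≤ #(Fintype.piFinset fun _ : Fin k => block) := by
        refine card_le_card_of_injOn Fin.tail (fun e he => ?_) fun e he e' he' htail => ?_
        · simp only [coe_filter, Set.mem_ofPred_eq, mem_filter, Fintype.mem_piFinset] at he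
          simp only [mem_coe, Fintype.mem_piFinset, block, mem_filter]
          exact fun i => ⟨he.1.1 _, by rw [← he.2]; exact he.1.2 _⟩
        · simp only [coe_filter, Set.mem_ofPred_eq] at he he'
          rw [← Fin.cons_self_tail e, ← Fin.cons_self_tail e', htail, he.2, he'.2]
    _ = #block ^ k := by simp
    _ ≤ g ^ k := Nat.pow_le_pow_left (card_block_le A hg _) k

/-- The cell containing `p` when the rows and columns of the grid `A × B` are cut into blocks of
`g` lines. -/
def cellIndex (A : Finset α) (B : Finset β) (g : ℕ) (p : α × β) : ℕ × ℕ :=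
  (blockIndex A g p.1, blockIndex B g p.2)

theorem card_le_two_mul_of_monovaryOn {C : Finset (ℕ × ℕ)} {r : ℕ} (hC : C ⊆ range r ×ˢ range r)
    (hmono : MonovaryOn Prod.snd Prod.fst (C : Set (ℕ × ℕ))) : #C ≤ 2 * r := by
  rw [← card_range (2 * r)]
  refine card_le_card_of_injOn (fun c => c.1 + c.2) (fun c hc => ?_) fun c hc c' hc' hsum => ?_
  · have := mem_product.1 (hC hc)
    simp only [mem_range, coe_range, Set.mem_Iio] at this ⊢
    omega
  · have := @hmono c hc c' hc'
    have := @hmono c' hc' c hc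
    ext <;> grind

theorem card_le_two_mul_of_antivaryOn {C : Finset (ℕ × ℕ)} {r : ℕ}
    (hC : C ⊆ range r ×ˢ range r)
    (hanti : AntivaryOn Prod.snd Prod.fst (C : Set (ℕ × ℕ))) : #C ≤ 2 * r := by
  let reflect : ℕ × ℕ → ℕ × ℕ := fun c => (c.1, r - 1 - c.2)
  have hC : ∀ c ∈ C, c.1 < r ∧ c.2 < r := by simpa [subset_iff] using hC
  have hinj : Set.InjOn reflect C := by
    intro c hc c' hc' hcc'
    have := hC c hc
    have := hC c' hc'
    simp only [reflect, Prod.mk.injEq] at hcc'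
    ext <;> omega
  rw [← card_image_of_injOn hinj]
  apply card_le_two_mul_of_monovaryOn
  · intro c' hc'
    obtain ⟨c, hc, rfl⟩ := mem_image.1 hc'
    have := hC c hc
    simp only [mem_product, mem_range, reflect]
    omega
  · simp only [MonovaryOn, mem_coe, mem_image]
    rintro _ ⟨c, hc, rfl⟩ _ ⟨c', hc', rfl⟩ hlt
    exact Nat.sub_le_sub_left (hanti hc hc' hlt) _

variable {A : Finset α} {B : Finset β} {r g : ℕ}

theorem image_cellIndex_subset {G : Finset (α × β)} (hG : G ⊆ A ×ˢ B) (hA : #A ≤ r * g)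
    (hB : #B ≤ r * g) : G.image (cellIndex A B g) ⊆ range r ×ˢ range r := by
  intro c hc
  obtain ⟨p, hp, rfl⟩ := mem_image.1 hc
  have hp := mem_product.1 (hG hp)
  exact mem_product.2 ⟨mem_range.2 (blockIndex_lt hA hp.1), mem_range.2 (blockIndex_lt hB hp.2)⟩

theorem card_le_add_card_constTuples_cellIndex {G : Finset (α × β)} (hG : G ⊆ A ×ˢ B)
    (hA : #A ≤ g) (hB : #B ≤ g) (k : ℕ) :
    #G ≤ k + #(constTuples (cellIndex A B g) k G) := by
  have hcell := card_le_card (image_cellIndex_subset hG (hA.trans_eq (one_mul g).symm)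
    (hB.trans_eq (one_mul g).symm))
  rw [card_product, card_range, one_mul] at hcell
  exact (card_le_mul_card_image_add_card_constTuples G (cellIndex A B g) k).trans
    (Nat.add_le_add_right (by simpa using Nat.mul_le_mul_left k hcell) _)

theorem card_image_cellIndex_le {G : Finset (α × β)} (hG : G ⊆ A ×ˢ B) (hA : #A ≤ r * g)
    (hB : #B ≤ r * g)
    (hvary : MonovaryOn Prod.snd Prod.fst (G : Set (α × β)) ∨
      AntivaryOn Prod.snd Prod.fst (G : Set (α × β))) :
    #(G.image (cellIndex A B g)) ≤ 2 * r := by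
  have hgrid := image_cellIndex_subset hG hA hB
  rcases hvary with hmono | hanti
  · apply card_le_two_mul_of_monovaryOn hgrid
    simp only [MonovaryOn, mem_coe, mem_image]
    rintro _ ⟨p, hp, rfl⟩ _ ⟨q, hq, rfl⟩ hlt
    exact blockIndex_mono B g (hmono hp hq ((blockIndex_mono A g).reflect_lt hlt))
  · apply card_le_two_mul_of_antivaryOn hgrid
    simp only [AntivaryOn, mem_coe, mem_image]
    rintro _ ⟨p, hp, rfl⟩ _ ⟨q, hq, rfl⟩ hlt
    exact blockIndex_mono B g (hanti hp hq ((blockIndex_mono A g).reflect_lt hlt))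

theorem card_tuples_in_cell_le (A : Finset α) (B : Finset β) (hg : 0 < g) (k : ℕ) :
    #{e ∈ Fintype.piFinset fun _ : Fin (k + 1) => A ×ˢ B |
      ∀ i, cellIndex A B g (e i) = cellIndex A B g (e 0)} ≤ (g ^ k * #A) * (g ^ k * #B) := by
  refine le_trans ?_
    (Nat.mul_le_mul (card_tuples_in_block_le A hg k) (card_tuples_in_block_le B hg k))
  rw [← card_product]
  refine card_le_card_of_injOn (fun e => (fun i => (e i).1, fun i => (e i).2)) (fun e he => ?_)
    fun e _ e' _ hee' => ?_
  · simp only [coe_filter, Set.mem_ofPred_eq, Fintype.mem_piFinset, mem_product, cellIndex,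
      Prod.mk.injEq] at he
    simp only [mem_coe, mem_product, mem_filter, Fintype.mem_piFinset]
    exact ⟨⟨fun i => (he.1 i).1, fun i => (he.2 i).1⟩,
      fun i => (he.1 i).2, fun i => (he.2 i).2⟩
  · simp only [Prod.mk.injEq, funext_iff] at hee'
    exact funext fun i => Prod.ext (hee'.1 i) (hee'.2 i)

theorem sum_card_constTuples_cellIndex_le {L : Finset κ} {F : κ → Finset (α × β)} {k : ℕ}
    (hF : ∀ l ∈ L, F l ⊆ A ×ˢ B) (hg : 0 < g)
    (hcommon : ∀ l ∈ L, ∀ l' ∈ L, ∀ e ∈ injTuples (k + 1) (F l),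
      e ∈ injTuples (k + 1) (F l') → l = l') :
    ∑ l ∈ L, #(constTuples (cellIndex A B g) k (F l)) ≤ (g ^ k * #A) * (g ^ k * #B) := by
  refine le_trans (sum_card_le_card_of_pairwiseDisjoint ?_ ?_) (card_tuples_in_cell_le A B hg k)
  · intro l hl l' hl' hne
    exact disjoint_left.2 fun e he he' => hne (hcommon l hl l' hl' e
      (constTuples_subset_injTuples _ _ _ he) (constTuples_subset_injTuples _ _ _ he'))
  · intro l hl e he
    have he := mem_constTuples.1 he
    exact mem_filter.2 ⟨Fintype.mem_piFinset.2 fun i => hF l hl (he.1 i), he.2.2⟩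

theorem le_mul_div_add_one (D : ℕ) {r : ℕ} (hr : 0 < r) : D ≤ r * (D / r + 1) :=
  (Nat.lt_mul_div_succ D hr).le

theorem mul_div_add_one_le {D r : ℕ} (hrD : r ≤ D) : r * (D / r + 1) ≤ 2 * D := by
  have := Nat.mul_div_le D r
  rw [mul_add]
  omega

end Cells

/-! ### Few values in many directions -/

section Inversions

variable {ι α β : Type*} [LinearOrder α] [LinearOrder β] {P : Finset ι} {f : ι → α} {h : ι → β}

/-- The ordered pairs of elements of `P` which are put in opposite orders by `f` and `h`. -/
noncomputable def inversions (P : Finset ι) (f : ι → α) (h : ι → β) : Finset (ι × ι) :=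
  {e ∈ P ×ˢ P | f e.1 < f e.2 ∧ h e.2 < h e.1}

theorem card_pairs_in_cell_le {A : Finset α} {B : Finset β} {g : ℕ} (hg : 0 < g)
    (hA : ∀ p ∈ P, f p ∈ A) (hB : ∀ p ∈ P, h p ∈ B)
    (hinj : Set.InjOn (fun p => (f p, h p)) P) :
    #{e ∈ P ×ˢ P | cellIndex A B g (f e.1, h e.1) = cellIndex A B g (f e.2, h e.2)} ≤
      g * g * #P := by
  refine card_le_mul_card_image_of_maps_to (f := Prod.fst)
    (fun e he => (mem_product.1 (mem_filter.1 he).1).1) _ fun p _ => ?_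
  refine le_trans ?_ (Nat.mul_le_mul (card_block_le A hg (blockIndex A g (f p)))
    (card_block_le B hg (blockIndex B g (h p))))
  rw [← card_product]
  refine card_le_card_of_injOn (fun e => (f e.2, h e.2)) (fun e he => ?_)
    fun e he e' he' hee' => ?_
  · simp only [coe_filter, mem_filter, mem_product, Set.mem_ofPred_eq, cellIndex,
      Prod.mk.injEq] at he
    obtain ⟨⟨⟨-, hmem⟩, hf, hh⟩, rfl⟩ := he
    simp only [coe_product, Set.mem_prod, mem_coe, mem_filter]
    exact ⟨⟨hA _ hmem, hf.symm⟩, hB _ hmem, hh.symm⟩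
  · simp only [coe_filter, mem_filter, mem_product, Set.mem_ofPred_eq] at he he'
    exact Prod.ext (he.2.trans he'.2.symm) (hinj he.1.1.2 he'.1.1.2 hee')

theorem cellIndex_eq_or_mem_inversions {A : Finset α} {B : Finset β} {g : ℕ} {e : ι × ι}
    (he : e ∈ P ×ˢ P)
    (hdiag : blockIndex A g (f e.1) + blockIndex B g (h e.1) =
      blockIndex A g (f e.2) + blockIndex B g (h e.2)) :
    cellIndex A B g (f e.1, h e.1) = cellIndex A B g (f e.2, h e.2) ∨
      e ∈ inversions P f h ∨ e.swap ∈ inversions P f h := by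
  have hf := (blockIndex_mono A g).reflect_lt (a := f e.1) (b := f e.2)
  have hf' := (blockIndex_mono A g).reflect_lt (a := f e.2) (b := f e.1)
  have hh := (blockIndex_mono B g).reflect_lt (a := h e.1) (b := h e.2)
  have hh' := (blockIndex_mono B g).reflect_lt (a := h e.2) (b := h e.1)
  rcases lt_trichotomy (blockIndex A g (f e.1)) (blockIndex A g (f e.2)) with hlt | heq | hgt
  · exact Or.inr (Or.inl (mem_filter.2 ⟨he, hf hlt, hh' (by omega)⟩))
  · exact Or.inl (Prod.ext heq (by simp only [cellIndex]; omega))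
  · exact Or.inr (Or.inr (mem_filter.2
      ⟨mem_product.2 (mem_product.1 he).symm, hf' hgt, hh (by omega)⟩))

theorem card_sq_le_inversions {r g : ℕ} (hinj : Set.InjOn (fun p => (f p, h p)) P)
    (hf : #(P.image f) ≤ r * g) (hh : #(P.image h) ≤ r * g) (hg : 0 < g) :
    #P ^ 2 ≤ 2 * r * (2 * #(inversions P f h) + g * g * #P) := by
  let diag p := blockIndex (P.image f) g (f p) + blockIndex (P.image h) g (h p)
  let sameCell := {e ∈ P ×ˢ P | cellIndex (P.image f) (P.image h) g (f e.1, h e.1) =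
    cellIndex (P.image f) (P.image h) g (f e.2, h e.2)}
  have hdiag : P.image diag ⊆ range (2 * r) := by
    intro d hd
    obtain ⟨p, hp, rfl⟩ := mem_image.1 hd
    have := blockIndex_lt hf (mem_image_of_mem f hp)
    have := blockIndex_lt hh (mem_image_of_mem h hp)
    simp only [mem_range, diag]
    omega
  have hsplit : {e ∈ P ×ˢ P | diag e.1 = diag e.2} ⊆
      sameCell ∪ (inversions P f h ∪ (inversions P f h).image Prod.swap) := by
    intro e he
    obtain ⟨hmem, he⟩ := mem_filter.1 he
    simp only [sameCell, mem_union, mem_filter, mem_image]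
    rcases cellIndex_eq_or_mem_inversions hmem he with hcell | hinv | hinv
    exacts [Or.inl ⟨hmem, hcell⟩, Or.inr (Or.inl hinv),
      Or.inr (Or.inr ⟨e.swap, hinv, e.swap_swap⟩)]
  calc #P ^ 2 ≤ #(P.image diag) * #{e ∈ P ×ˢ P | diag e.1 = diag e.2} :=
        card_sq_le_card_image_mul P diag
    _ ≤ 2 * r * (g * g * #P + (#(inversions P f h) + #(inversions P f h))) := by
      refine Nat.mul_le_mul ((card_le_card hdiag).trans_eq (card_range _))
        ((card_le_card hsplit).trans ((card_union_le _ _).trans (Nat.add_le_add ?_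
          ((card_union_le _ _).trans (Nat.add_le_add_left card_image_le _)))))
      exact card_pairs_in_cell_le hg (fun p hp => mem_image_of_mem f hp)
        (fun p hp => mem_image_of_mem h hp) hinj
    _ = _ := by ring

theorem card_pow_three_le_inversions {u : ℕ} (hinj : Set.InjOn (fun p => (f p, h p)) P)
    (hf : #(P.image f) ≤ u) (hh : #(P.image h) ≤ u) (hu : 8 * u ≤ #P) :
    #P ^ 3 ≤ 256 * u ^ 2 * #(inversions P f h) := by
  rcases P.eq_empty_or_nonempty with rfl | hP
  · simp
  have hu0 : 0 < u := (card_pos.2 (hP.image f)).trans_le hf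
  have hPu : #P ≤ u * u := by
    refine le_trans ?_ (Nat.mul_le_mul hf hh)
    rw [← card_product]
    exact card_le_card_of_injOn _ (fun p hp => mem_coe.2 (mem_product.2
      ⟨mem_image_of_mem f hp, mem_image_of_mem h hp⟩)) hinj
  -- With this block size the pairs in a common cell account for at most half of the total.
  obtain ⟨g, hg⟩ : ∃ g, g = #P / (8 * u) := ⟨_, rfl⟩
  have hg0 : 0 < g := hg ▸ Nat.div_pos hu (by positivity)
  have hg_le : 8 * u * g ≤ #P := hg ▸ Nat.mul_div_le _ _
  have hg_lt : #P < 8 * u * (g + 1) := hg ▸ Nat.lt_mul_div_succ _ (by positivity)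
  have hgu : g ≤ u := by nlinarith
  have hcells := card_sq_le_inversions hinj (hf.trans (mul_comm g _ ▸ le_mul_div_add_one u hg0))
    (hh.trans (mul_comm g _ ▸ le_mul_div_add_one u hg0)) hg0
  have hhalf : #P ^ 2 * g ≤ 16 * u * #(inversions P f h) := by
    have := mul_div_add_one_le hgu
    have : #P ^ 2 * g ≤ 4 * u * (2 * #(inversions P f h) + g * g * #P) := by
      calc #P ^ 2 * g
          ≤ 2 * (u / g + 1) * (2 * #(inversions P f h) + g * g * #P) * g :=
            Nat.mul_le_mul_right g hcells
        _ = 2 * (g * (u / g + 1)) * (2 * #(inversions P f h) + g * g * #P) := by ring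
        _ ≤ 2 * (2 * u) * (2 * #(inversions P f h) + g * g * #P) := by gcongr
        _ = _ := by ring
    nlinarith [Nat.mul_le_mul_right (#P * g) hg_le]
  calc #P ^ 3 = #P * #P ^ 2 := by ring
    _ ≤ 16 * u * g * #P ^ 2 := by gcongr; nlinarith
    _ = 16 * u * (#P ^ 2 * g) := by ring
    _ ≤ 16 * u * (16 * u * #(inversions P f h)) := by gcongr
    _ = _ := by ring

end Inversions

section Directions

variable {K : Type*} [Field K] [LinearOrder K] [IsStrictOrderedRing K]

-- An inversion between two directions determines a chord whose direction lies between them.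
theorem sum_card_inversions_le (P : Finset (K × K)) {m : ℕ} {σ : Fin (m + 1) → K}
    (hσ : StrictMono σ) :
    ∑ i : Fin m, #(inversions P (fun p => p.1 - σ i.castSucc * p.2)
      (fun p => p.1 - σ i.succ * p.2)) ≤ #P ^ 2 := by
  rw [sq, ← card_product]
  refine sum_card_le_card_of_pairwiseDisjoint (fun i _ j _ hij => ?_) fun i _ => filter_subset _ _
  wlog hlt : i < j generalizing i j
  · exact (this j (mem_coe.2 (mem_univ j)) i (mem_coe.2 (mem_univ i)) hij.symm
      (lt_of_le_of_ne (not_lt.1 hlt) hij.symm)).symm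
  refine disjoint_left.2 fun e hei hej => ?_
  obtain ⟨-, hei, hei'⟩ := mem_filter.1 hei
  obtain ⟨-, hej, -⟩ := mem_filter.1 hej
  have hσi : σ i.castSucc < σ i.succ := hσ i.castSucc_lt_succ
  have hσij : σ i.succ ≤ σ j.castSucc := hσ.monotone (Fin.succ_le_castSucc_iff.2 hlt)
  have hdy : e.1.2 < e.2.2 := by nlinarith
  linarith [mul_le_mul_of_nonneg_right hσij (sub_nonneg.2 hdy.le)]

theorem injOn_sub_mul {s s' : K} (hs : s ≠ s') (P : Set (K × K)) :
    Set.InjOn (fun p => (p.1 - s * p.2, p.1 - s' * p.2)) P := by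
  intro p _ q _ hpq
  simp only [Prod.mk.injEq] at hpq
  have hsnd : p.2 = q.2 :=
    mul_left_cancel₀ (sub_ne_zero.2 hs) (by linear_combination hpq.2 - hpq.1)
  exact Prod.ext (by linear_combination hpq.1 + s * hsnd) hsnd

theorem card_mul_card_slopes_le {P : Finset (K × K)} {S : Finset K} {u : ℕ}
    (hu : ∀ s ∈ S, #(P.image fun p => p.1 - s * p.2) ≤ u) (hS : 2 ≤ #S) (hSP : #S ≤ #P) :
    #P * #S ≤ 512 * u ^ 2 := by
  rcases lt_or_ge #P (8 * u) with hP | hP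
  · nlinarith [Nat.mul_le_mul hSP hP.le]
  obtain ⟨m, hm⟩ : ∃ m, #S = m + 1 := ⟨#S - 1, by omega⟩
  let σ := S.orderEmbOfFin hm
  have hσ : ∀ i, #(P.image fun p => p.1 - σ i * p.2) ≤ u :=
    fun i => hu _ (S.orderEmbOfFin_mem hm i)
  have hsum : m * #P ^ 3 ≤ 256 * u ^ 2 * #P ^ 2 := by
    calc m * #P ^ 3 = ∑ _i : Fin m, #P ^ 3 := by simp
      _ ≤ ∑ i : Fin m, 256 * u ^ 2 * #(inversions P (fun p => p.1 - σ i.castSucc * p.2)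
          (fun p => p.1 - σ i.succ * p.2)) :=
        sum_le_sum fun i _ => card_pow_three_le_inversions
          (injOn_sub_mul (σ.injective.ne i.castSucc_lt_succ.ne) _) (hσ _) (hσ _) hP
      _ ≤ 256 * u ^ 2 * #P ^ 2 := by
        rw [← mul_sum]
        gcongr
        exact sum_card_inversions_le P σ.strictMono
  have hmP : m * #P ≤ 256 * u ^ 2 :=
    Nat.le_of_mul_le_mul_right (by linarith) (pow_pos (by omega : 0 < #P) 2)
  nlinarith [show #S ≤ 2 * m by omega]

end Directions

/-! ### Lines in a grid -/

section Lines

variable {K : Type*} [Field K] [LinearOrder K]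

/-- The points of the grid `T × T` on the line `x * l.1 + y = l.2`. -/
def gridPointsOnLine (T : Finset K) (l : K × K) : Finset (K × K) :=
  {p ∈ T ×ˢ T | p.1 * l.1 + p.2 = l.2}

/-- The incidences between the grid `T × T` and the lines `x * l.1 + y = l.2` with `l ∈ L`. -/
def gridIncidences (T : Finset K) (L : Finset (K × K)) : Finset ((K × K) × (K × K)) :=
  {e ∈ (T ×ˢ T) ×ˢ L | e.1.1 * e.2.1 + e.1.2 = e.2.2}

theorem card_gridIncidences (T : Finset K) (L : Finset (K × K)) :
    #(gridIncidences T L) = ∑ l ∈ L, #(gridPointsOnLine T l) := by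
  simp only [gridIncidences, gridPointsOnLine, card_filter]
  exact sum_product_right _ _ _

theorem card_gridPointsOnLine_le (T : Finset K) (l : K × K) : #(gridPointsOnLine T l) ≤ #T := by
  refine card_le_card_of_injOn Prod.fst
    (fun p hp => (mem_product.1 (mem_filter.1 hp).1).1) fun p hp q hq hpq => ?_
  have hp := (mem_filter.1 hp).2
  have hq := (mem_filter.1 hq).2
  exact Prod.ext hpq (by linear_combination hp - hq - l.1 * hpq)

theorem line_eq_of_mem_injTuples {T : Finset K} {l l' : K × K} {e : Fin 2 → K × K}
    (he : e ∈ injTuples 2 (gridPointsOnLine T l))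
    (he' : e ∈ injTuples 2 (gridPointsOnLine T l')) : l = l' := by
  obtain ⟨hon, hinj⟩ := mem_injTuples.1 he
  have hl := fun i => (mem_filter.1 (hon i)).2
  have hl' := fun i => (mem_filter.1 ((mem_injTuples.1 he').1 i)).2
  have hfst : (e 0).1 - (e 1).1 ≠ 0 := by
    intro h
    refine absurd (hinj (Prod.ext (sub_eq_zero.1 h) ?_ : e 0 = e 1)) (by decide)
    linear_combination hl 0 - hl 1 - l.1 * h
  have hslope : l.1 = l'.1 :=
    mul_left_cancel₀ hfst (by linear_combination hl 0 - hl 1 - hl' 0 + hl' 1)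
  exact Prod.ext hslope (by linear_combination hl' 0 - hl 0 + (e 0).1 * hslope)

variable [IsStrictOrderedRing K]

theorem monovaryOn_or_antivaryOn_gridPointsOnLine (T : Finset K) (l : K × K) :
    MonovaryOn Prod.snd Prod.fst (gridPointsOnLine T l : Set (K × K)) ∨
      AntivaryOn Prod.snd Prod.fst (gridPointsOnLine T l : Set (K × K)) := by
  rcases le_total l.1 0 with hslope | hslope
  · refine Or.inl fun p hp q hq hpq => ?_
    have hp := (mem_filter.1 hp).2
    have hq := (mem_filter.1 hq).2
    nlinarith
  · refine Or.inr fun p hp q hq hpq => ?_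
    have hp := (mem_filter.1 hp).2
    have hq := (mem_filter.1 hq).2
    nlinarith

theorem sq_mul_card_gridIncidences_le (T : Finset K) (L : Finset (K × K)) {r : ℕ} (hr : 0 < r)
    (hrT : r ≤ #T) :
    r ^ 2 * #(gridIncidences T L) ≤ 2 * r ^ 3 * #L + 4 * #T ^ 4 := by
  obtain ⟨g, hg⟩ : ∃ g, g = #T / r + 1 := ⟨_, rfl⟩
  have hg0 : 0 < g := hg ▸ Nat.succ_pos _
  have hT : #T ≤ r * g := hg ▸ le_mul_div_add_one _ hr
  have hrg : r * g ≤ 2 * #T := hg ▸ mul_div_add_one_le hrT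
  have hline : ∀ l ∈ L, #(gridPointsOnLine T l) ≤
      2 * r + #(constTuples (cellIndex T T g) 1 (gridPointsOnLine T l)) := by
    intro l _
    have hcells := card_image_cellIndex_le (filter_subset _ _) hT hT
      (monovaryOn_or_antivaryOn_gridPointsOnLine T l)
    have := card_le_mul_card_image_add_card_constTuples (gridPointsOnLine T l) (cellIndex T T g) 1
    rw [one_mul] at this
    exact this.trans (Nat.add_le_add_right hcells _)
  have hpairs : ∑ l ∈ L, #(constTuples (cellIndex T T g) 1 (gridPointsOnLine T l)) ≤
      (g ^ 1 * #T) * (g ^ 1 * #T) :=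
    sum_card_constTuples_cellIndex_le (fun l _ => filter_subset _ _) hg0
      fun l _ l' _ e => line_eq_of_mem_injTuples
  calc r ^ 2 * #(gridIncidences T L)
      ≤ r ^ 2 * (2 * r * #L + (g ^ 1 * #T) * (g ^ 1 * #T)) := by
        rw [card_gridIncidences]
        gcongr
        refine (sum_le_sum hline).trans ?_
        rw [sum_add_distrib, sum_const, smul_eq_mul, mul_comm #L]
        gcongr
    _ = 2 * r ^ 3 * #L + (r * g) ^ 2 * #T ^ 2 := by ring
    _ ≤ 2 * r ^ 3 * #L + (2 * #T) ^ 2 * #T ^ 2 := by gcongr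
    _ = _ := by ring

theorem card_gridIncidences_le_or (T : Finset K) (L : Finset (K × K)) :
    #(gridIncidences T L) ≤ 4 * #L ∨ #(gridIncidences T L) ^ 3 ≤ 512 * #L ^ 2 * #T ^ 4 := by
  refine or_iff_not_imp_left.2 fun hmany => ?_
  have hTL : #(gridIncidences T L) ≤ #T * #L := by
    rw [card_gridIncidences, mul_comm, ← smul_eq_mul]
    exact sum_le_card_nsmul _ _ _ fun l _ => card_gridPointsOnLine_le T l
  have hL : 0 < #L := Nat.pos_of_ne_zero fun hL => hmany (by simpa [hL] using hTL)
  obtain ⟨I, hI⟩ : ∃ I, I = #(gridIncidences T L) := ⟨_, rfl⟩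
  rw [← hI] at hmany hTL ⊢
  -- With this number of blocks the cells met by the lines account for half of the incidences.
  obtain ⟨r, hr⟩ : ∃ r, r = I / (4 * #L) := ⟨_, rfl⟩
  have hr0 : 0 < r := hr ▸ Nat.div_pos (by omega) (by positivity)
  have hr_le : 4 * #L * r ≤ I := hr ▸ Nat.mul_div_le _ _
  have hr_lt : I < 4 * #L * (r + 1) := hr ▸ Nat.lt_mul_div_succ _ (by positivity)
  have hrT : r ≤ #T := by nlinarith
  have hcells := sq_mul_card_gridIncidences_le T L hr0 hrT
  rw [← hI] at hcells
  have hpairs : r ^ 2 * I ≤ 8 * #T ^ 4 := by nlinarith [Nat.mul_le_mul_left (r ^ 2) hr_le]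
  have hIr : I ≤ 8 * #L * r := by nlinarith
  calc I ^ 3 = I ^ 2 * I := by ring
    _ ≤ (8 * #L * r) ^ 2 * I := by gcongr
    _ = 64 * #L ^ 2 * (r ^ 2 * I) := by ring
    _ ≤ 64 * #L ^ 2 * (8 * #T ^ 4) := by gcongr
    _ = _ := by ring

end Lines

/-! ### Möbius graphs in a grid -/

section Mobius

variable {K : Type*} [Field K] {S : Finset K} {G G' : Finset (K × K)}

/-- The points of the grid `S × S` on the graph of the Möbius transformation
`x ↦ (a * x + b) / (c * x + d)`. The equation is cleared of denominators, so that the pole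
carries no point as long as `a * d - b * c ≠ 0`. -/
noncomputable def mobiusGraph (S : Finset K) (a b c d : K) : Finset (K × K) :=
  {p ∈ S ×ˢ S | p.2 * (c * p.1 + d) = a * p.1 + b}

theorem mem_mobiusGraph {a b c d : K} {p : K × K} :
    p ∈ mobiusGraph S a b c d ↔ p ∈ S ×ˢ S ∧ p.2 * (c * p.1 + d) = a * p.1 + b :=
  mem_filter

theorem mobiusGraph_subset (S : Finset K) (a b c d : K) : mobiusGraph S a b c d ⊆ S ×ˢ S :=
  filter_subset _ _

/-- `G` is the trace on `S × S` of the graph of an invertible Möbius transformation. -/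
def IsMobiusGraph (S : Finset K) (G : Finset (K × K)) : Prop :=
  ∃ a b c d : K, a * d - b * c ≠ 0 ∧ G = mobiusGraph S a b c d

/-- The Möbius graphs with at least three points in `S × S`; three points determine the
transformation. -/
noncomputable def mobiusGraphs (S : Finset K) : Finset (Finset (K × K)) :=
  {G ∈ (S ×ˢ S).powerset | IsMobiusGraph S G ∧ 3 ≤ #G}

theorem subset_of_mem_mobiusGraphs (hG : G ∈ mobiusGraphs S) : G ⊆ S ×ˢ S :=
  mem_powerset.1 (mem_filter.1 hG).1

theorem isMobiusGraph_of_mem_mobiusGraphs (hG : G ∈ mobiusGraphs S) : IsMobiusGraph S G :=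
  (mem_filter.1 hG).2.1

theorem mobius_denom_ne_zero {a b c d x y : K} (hdet : a * d - b * c ≠ 0)
    (hxy : y * (c * x + d) = a * x + b) : c * x + d ≠ 0 := by
  intro h0
  rw [h0, mul_zero] at hxy
  exact hdet (by linear_combination a * h0 + c * hxy)

theorem quadratic_eq_zero_of_three_roots {A B C x y z : K} (hxy : x ≠ y) (hxz : x ≠ z)
    (hyz : y ≠ z) (hx : A * x ^ 2 + B * x + C = 0) (hy : A * y ^ 2 + B * y + C = 0)
    (hz : A * z ^ 2 + B * z + C = 0) : A = 0 ∧ B = 0 ∧ C = 0 := by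
  have hxy' : A * (x + y) + B = 0 :=
    mul_left_cancel₀ (sub_ne_zero.2 hxy) (by linear_combination hx - hy)
  have hxz' : A * (x + z) + B = 0 :=
    mul_left_cancel₀ (sub_ne_zero.2 hxz) (by linear_combination hx - hz)
  obtain rfl : A = 0 := mul_left_cancel₀ (sub_ne_zero.2 hyz) (by linear_combination hxy' - hxz')
  obtain rfl : B = 0 := by linear_combination hxy'
  exact ⟨rfl, rfl, by linear_combination hx⟩

theorem IsMobiusGraph.injOn_fst (hG : IsMobiusGraph S G) :
    Set.InjOn Prod.fst (G : Set (K × K)) := by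
  obtain ⟨a, b, c, d, hdet, rfl⟩ := hG
  intro p hp q hq hpq
  have hp := (mem_mobiusGraph.1 hp).2
  have hq := (mem_mobiusGraph.1 hq).2
  refine Prod.ext hpq (mul_right_cancel₀ (mobius_denom_ne_zero hdet hq) ?_)
  rw [hq, ← hpq, hp]

theorem card_le_of_mem_mobiusGraphs (hG : G ∈ mobiusGraphs S) : #G ≤ #S :=
  card_le_card_of_injOn Prod.fst
    (fun _ hp => (mem_product.1 (subset_of_mem_mobiusGraphs hG hp)).1)
    (isMobiusGraph_of_mem_mobiusGraphs hG).injOn_fst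

theorem IsMobiusGraph.subset_of_mem_injTuples (hG : IsMobiusGraph S G) (hG' : IsMobiusGraph S G')
    {e : Fin 3 → K × K} (he : e ∈ injTuples 3 G) (he' : e ∈ injTuples 3 G') : G ⊆ G' := by
  obtain ⟨hon, hinj⟩ := mem_injTuples.1 he
  have hon' := (mem_injTuples.1 he').1
  have hne : ∀ {i j}, i ≠ j → (e i).1 ≠ (e j).1 :=
    fun hij h => hij (hinj (hG.injOn_fst (hon _) (hon _) h))
  obtain ⟨a, b, c, d, hdet, rfl⟩ := hG
  obtain ⟨a', b', c', d', -, rfl⟩ := hG'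
  -- The first coordinates of the common points are roots of one quadratic.
  have hroot : ∀ i, (a * c' - a' * c) * (e i).1 ^ 2 +
      (a * d' + b * c' - a' * d - b' * c) * (e i).1 + (b * d' - b' * d) = 0 := fun i => by
    linear_combination (-(c' * (e i).1 + d')) * (mem_mobiusGraph.1 (hon i)).2 +
      (c * (e i).1 + d) * (mem_mobiusGraph.1 (hon' i)).2
  obtain ⟨hA, hB, hC⟩ := quadratic_eq_zero_of_three_roots (hne (by decide : (0 : Fin 3) ≠ 1))
    (hne (by decide : (0 : Fin 3) ≠ 2)) (hne (by decide : (1 : Fin 3) ≠ 2))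
    (hroot 0) (hroot 1) (hroot 2)
  intro p hp
  obtain ⟨hmem, hp⟩ := mem_mobiusGraph.1 hp
  refine mem_mobiusGraph.2 ⟨hmem, mul_right_cancel₀ (mobius_denom_ne_zero hdet hp) ?_⟩
  linear_combination (c' * p.1 + d') * hp + p.1 ^ 2 * hA + p.1 * hB + hC

variable [LinearOrder K]

theorem sum_card_constTuples_mobiusGraphs_le (S : Finset K) {g : ℕ} (hg : 0 < g) :
    ∑ G ∈ mobiusGraphs S, #(constTuples (cellIndex S S g) 2 G) ≤
      (g ^ 2 * #S) * (g ^ 2 * #S) := by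
  refine sum_card_constTuples_cellIndex_le (F := fun G => G)
    (fun G hG => subset_of_mem_mobiusGraphs hG) hg fun G hG G' hG' e he he' => ?_
  have hG := isMobiusGraph_of_mem_mobiusGraphs hG
  have hG' := isMobiusGraph_of_mem_mobiusGraphs hG'
  exact (hG.subset_of_mem_injTuples hG' he he').antisymm (hG'.subset_of_mem_injTuples hG he' he)

variable [IsStrictOrderedRing K]

theorem monovaryOn_or_antivaryOn_mobiusGraph {a b c d : K} (hdet : a * d - b * c ≠ 0)
    (hG : G ⊆ mobiusGraph S a b c d)
    (hpos : ∀ p ∈ G, ∀ q ∈ G, 0 < (c * p.1 + d) * (c * q.1 + d)) :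
    MonovaryOn Prod.snd Prod.fst (G : Set (K × K)) ∨
      AntivaryOn Prod.snd Prod.fst (G : Set (K × K)) := by
  have hdiff : ∀ p ∈ G, ∀ q ∈ G, (p.2 - q.2) * ((c * p.1 + d) * (c * q.1 + d)) =
      (a * d - b * c) * (p.1 - q.1) := by
    intro p hp q hq
    linear_combination (c * q.1 + d) * (mem_mobiusGraph.1 (hG hp)).2 -
      (c * p.1 + d) * (mem_mobiusGraph.1 (hG hq)).2
  rcases lt_or_gt_of_ne hdet with hneg | hpos_det
  · refine Or.inr fun p hp q hq hpq => sub_nonneg.1 (pos_of_mul_pos_left ?_ (hpos p hp q hq).le).le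
    rw [hdiff p hp q hq]
    exact mul_pos_of_neg_of_neg hneg (sub_neg.2 hpq)
  · refine Or.inl fun p hp q hq hpq => sub_nonneg.1 (pos_of_mul_pos_left ?_ (hpos q hq p hp).le).le
    rw [hdiff q hq p hp]
    exact mul_pos hpos_det (sub_pos.2 hpq)

theorem IsMobiusGraph.card_image_cellIndex_le (hG : IsMobiusGraph S G) {r g : ℕ}
    (hS : #S ≤ r * g) : #(G.image (cellIndex S S g)) ≤ 4 * r := by
  obtain ⟨a, b, c, d, hdet, rfl⟩ := hG
  let G := mobiusGraph S a b c d
  have hGS : G ⊆ S ×ˢ S := mobiusGraph_subset S a b c d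
  have hbranches : G = {p ∈ G | 0 < c * p.1 + d} ∪ {p ∈ G | c * p.1 + d < 0} := by
    ext p
    have hsign := fun hp : p ∈ G =>
      lt_or_gt_of_ne (mobius_denom_ne_zero hdet (mem_mobiusGraph.1 hp).2)
    simp only [mem_union, mem_filter]
    tauto
  have hright : #({p ∈ G | 0 < c * p.1 + d}.image (cellIndex S S g)) ≤ 2 * r :=
    _root_.card_image_cellIndex_le ((filter_subset _ _).trans hGS) hS hS
      (monovaryOn_or_antivaryOn_mobiusGraph hdet (filter_subset _ _) fun p hp q hq =>
        mul_pos (mem_filter.1 hp).2 (mem_filter.1 hq).2)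
  have hleft : #({p ∈ G | c * p.1 + d < 0}.image (cellIndex S S g)) ≤ 2 * r :=
    _root_.card_image_cellIndex_le ((filter_subset _ _).trans hGS) hS hS
      (monovaryOn_or_antivaryOn_mobiusGraph hdet (filter_subset _ _) fun p hp q hq =>
        mul_pos_of_neg_of_neg (mem_filter.1 hp).2 (mem_filter.1 hq).2)
  change #(G.image (cellIndex S S g)) ≤ 4 * r
  rw [hbranches, image_union]
  have := card_union_le ({p ∈ G | 0 < c * p.1 + d}.image (cellIndex S S g))
    ({p ∈ G | c * p.1 + d < 0}.image (cellIndex S S g))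
  omega

theorem card_le_two_mul_card_constTuples (hG : IsMobiusGraph S G) {r : ℕ} (hr : 0 < r)
    (hrG : 16 * r ≤ #G) : #G ≤ 2 * #(constTuples (cellIndex S S (#S / r + 1)) 2 G) := by
  have := hG.card_image_cellIndex_le (le_mul_div_add_one #S hr)
  have := card_le_mul_card_image_add_card_constTuples G (cellIndex S S (#S / r + 1)) 2
  omega

theorem pow_three_le_three_mul_sum_sq (m : ℕ) : m ^ 3 ≤ 3 * ∑ r ∈ Icc 1 m, r ^ 2 := by
  induction m with
  | zero => simp
  | succ m ih =>
    rw [sum_Icc_succ_top (by omega), mul_add]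
    have : (m + 1) ^ 3 + (3 * m + 2) = m ^ 3 + 3 * (m + 1) ^ 2 := by ring
    omega

theorem card_pow_four_le_sum_constTuples (hG : G ∈ mobiusGraphs S) :
    #G ^ 4 ≤ 2 ^ 18 *
      ∑ r ∈ Icc 1 #S, r ^ 2 * #(constTuples (cellIndex S S (#S / r + 1)) 2 G) := by
  have hGS := card_le_of_mem_mobiusGraphs hG
  have hG3 : 3 ≤ #G := (mem_filter.1 hG).2.2
  let τ r := #(constTuples (cellIndex S S (#S / r + 1)) 2 G)
  rcases lt_or_ge #G 16 with hsmall | hlarge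
  · have hτ : #G ≤ 2 + τ 1 := card_le_add_card_constTuples_cellIndex
      (subset_of_mem_mobiusGraphs hG) (by omega) (by omega) 2
    have hterm : 1 ^ 2 * τ 1 ≤ ∑ r ∈ Icc 1 #S, r ^ 2 * τ r :=
      single_le_sum (f := fun r => r ^ 2 * τ r) (fun _ _ => Nat.zero_le _)
        (mem_Icc.2 ⟨le_rfl, by omega⟩)
    have hone : 1 ≤ ∑ r ∈ Icc 1 #S, r ^ 2 * τ r := by omega
    calc #G ^ 4 ≤ 16 ^ 4 := Nat.pow_le_pow_left hsmall.le 4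
      _ ≤ 2 ^ 18 * 1 := by norm_num
      _ ≤ _ := Nat.mul_le_mul_left _ hone
  · obtain ⟨m, hm⟩ : ∃ m, m = #G / 16 := ⟨_, rfl⟩
    have hτ : (∑ r ∈ Icc 1 m, r ^ 2) * #G ≤ 2 * ∑ r ∈ Icc 1 #S, r ^ 2 * τ r := by
      calc (∑ r ∈ Icc 1 m, r ^ 2) * #G ≤ ∑ r ∈ Icc 1 m, 2 * (r ^ 2 * τ r) := by
            rw [sum_mul]
            refine sum_le_sum fun r hr => ?_
            have hr := mem_Icc.1 hr
            have : #G ≤ 2 * τ r := card_le_two_mul_card_constTuples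
              (isMobiusGraph_of_mem_mobiusGraphs hG) hr.1 (by omega)
            nlinarith [Nat.mul_le_mul_left (r ^ 2) this]
        _ ≤ _ := by
          rw [← mul_sum]
          exact Nat.mul_le_mul_left _
            (sum_le_sum_of_subset (Icc_subset_Icc_right (by omega)))
    calc #G ^ 4 = #G ^ 3 * #G := by ring
      _ ≤ (32 * m) ^ 3 * #G := by gcongr; omega
      _ = 2 ^ 15 * m ^ 3 * #G := by ring
      _ ≤ 2 ^ 15 * (3 * ∑ r ∈ Icc 1 m, r ^ 2) * #G := by
        gcongr
        exact pow_three_le_three_mul_sum_sq m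
      _ = 3 * 2 ^ 15 * ((∑ r ∈ Icc 1 m, r ^ 2) * #G) := by ring
      _ ≤ 3 * 2 ^ 15 * (2 * ∑ r ∈ Icc 1 #S, r ^ 2 * τ r) := by gcongr
      _ ≤ _ := by simp only [τ]; omega

theorem sum_sq_mul_le_of_pow_four_mul_le {a : ℕ → ℕ} {B D : ℕ}
    (ha : ∀ r ∈ Icc 1 D, r ^ 4 * a r ≤ B) : ∑ r ∈ Icc 1 D, r ^ 2 * a r ≤ 2 * B := by
  have hterm : ∀ r ∈ Icc 1 D, (r : ℝ) ^ 2 * a r ≤ B * ((r : ℝ) ^ 2)⁻¹ := by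
    intro r hr
    have hr0 : (0 : ℝ) < r := by exact_mod_cast (mem_Icc.1 hr).1
    have hB : (r : ℝ) ^ 4 * a r ≤ B := by exact_mod_cast ha r hr
    rw [← div_eq_mul_inv, le_div_iff₀ (by positivity)]
    linarith
  have hinv : ∑ r ∈ Icc 1 D, ((r : ℝ) ^ 2)⁻¹ ≤ 2 := by
    have hIoo : Ioo 0 (D + 1) = Icc 1 D := by ext r; simp only [mem_Ioo, mem_Icc]; omega
    simpa [hIoo] using sum_Ioo_inv_sq_le (α := ℝ) 0 (D + 1)
  have : (∑ r ∈ Icc 1 D, (r : ℝ) ^ 2 * a r) ≤ 2 * B := by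
    calc _ ≤ ∑ r ∈ Icc 1 D, B * ((r : ℝ) ^ 2)⁻¹ := sum_le_sum hterm
      _ = B * ∑ r ∈ Icc 1 D, ((r : ℝ) ^ 2)⁻¹ := (mul_sum _ _ _).symm
      _ ≤ B * 2 := by gcongr
      _ = 2 * B := mul_comm _ _
  exact_mod_cast this

theorem sum_card_pow_four_mobiusGraphs_le (S : Finset K) :
    ∑ G ∈ mobiusGraphs S, #G ^ 4 ≤ 2 ^ 23 * #S ^ 6 := by
  let τ r := ∑ G ∈ mobiusGraphs S, #(constTuples (cellIndex S S (#S / r + 1)) 2 G)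
  have hτ : ∀ r ∈ Icc 1 #S, r ^ 4 * τ r ≤ 16 * #S ^ 6 := by
    intro r hr
    calc r ^ 4 * τ r ≤ r ^ 4 * (((#S / r + 1) ^ 2 * #S) * ((#S / r + 1) ^ 2 * #S)) := by
          gcongr
          exact sum_card_constTuples_mobiusGraphs_le S (Nat.succ_pos _)
      _ = (r * (#S / r + 1)) ^ 4 * #S ^ 2 := by ring
      _ ≤ (2 * #S) ^ 4 * #S ^ 2 := Nat.mul_le_mul_right _
        (Nat.pow_le_pow_left (mul_div_add_one_le (mem_Icc.1 hr).2) 4)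
      _ = 16 * #S ^ 6 := by ring
  calc ∑ G ∈ mobiusGraphs S, #G ^ 4
      ≤ ∑ G ∈ mobiusGraphs S, 2 ^ 18 *
          ∑ r ∈ Icc 1 #S, r ^ 2 * #(constTuples (cellIndex S S (#S / r + 1)) 2 G) :=
        sum_le_sum fun G hG => card_pow_four_le_sum_constTuples hG
    _ = 2 ^ 18 * ∑ r ∈ Icc 1 #S, r ^ 2 * τ r := by
      rw [← mul_sum, sum_comm]
      simp only [τ, mul_sum]
    _ ≤ 2 ^ 18 * (2 * (16 * #S ^ 6)) :=
      Nat.mul_le_mul_left _ (sum_sq_mul_le_of_pow_four_mul_le hτ)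
    _ = 2 ^ 23 * #S ^ 6 := by ring

end Mobius

/-! ### Cross ratios -/

section CrossRatio

variable {K : Type*} [Field K] {R : Finset K} {s t : Fin 4 → K}

/-- The cross ratio of four elements, normalised so that for pairwise distinct elements it is
nonzero, and so that it is a ratio of values of the skew form when the elements are slopes. -/
def crossRatio (s : Fin 4 → K) : K :=
  (s 0 - s 1) * (s 2 - s 3) / ((s 1 - s 2) * (s 0 - s 3))

theorem crossRatio_eq_crossRatio_iff (hs : Function.Injective s) (ht : Function.Injective t) :
    crossRatio s = crossRatio t ↔
      (s 0 - s 1) * (s 2 - s 3) * ((t 1 - t 2) * (t 0 - t 3)) =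
        (t 0 - t 1) * (t 2 - t 3) * ((s 1 - s 2) * (s 0 - s 3)) :=
  div_eq_div_iff
    (mul_ne_zero (sub_ne_zero.2 (hs.ne (by decide))) (sub_ne_zero.2 (hs.ne (by decide))))
    (mul_ne_zero (sub_ne_zero.2 (ht.ne (by decide))) (sub_ne_zero.2 (ht.ne (by decide))))

theorem exists_mobiusGraph_of_crossRatio_eq (hs : s ∈ injTuples 4 R) (ht : t ∈ injTuples 4 R)
    (hcr : crossRatio s = crossRatio t) : ∃ G ∈ mobiusGraphs R, ∀ i, (s i, t i) ∈ G := by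
  obtain ⟨hsR, hs⟩ := mem_injTuples.1 hs
  obtain ⟨htR, ht⟩ := mem_injTuples.1 ht
  rw [crossRatio_eq_crossRatio_iff hs ht] at hcr
  have hs' : ∀ {i j}, i ≠ j → s i - s j ≠ 0 := fun hij => sub_ne_zero.2 (hs.ne hij)
  have ht' : ∀ {i j}, i ≠ j → t i - t j ≠ 0 := fun hij => sub_ne_zero.2 (ht.ne hij)
  -- The transformation is `(y - t 2) / (y - t 0) = (α / β) * (x - s 2) / (x - s 0)`, which sends
  -- `s 0`, `s 2` to `t 0`, `t 2`; the ratio `α / β` is fixed by the image of `s 1`.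
  obtain ⟨α, hα⟩ : ∃ α, α = (s 0 - s 1) * (t 1 - t 2) := ⟨_, rfl⟩
  obtain ⟨β, hβ⟩ : ∃ β, β = (t 0 - t 1) * (s 1 - s 2) := ⟨_, rfl⟩
  have hα0 : α ≠ 0 := hα ▸ mul_ne_zero (hs' (by decide)) (ht' (by decide))
  have hβ0 : β ≠ 0 := hβ ▸ mul_ne_zero (ht' (by decide)) (hs' (by decide))
  let G := mobiusGraph R (α * t 0 - β * t 2) (β * t 2 * s 0 - α * s 2 * t 0) (α - β)
    (β * s 0 - α * s 2)
  have hdet : (α * t 0 - β * t 2) * (β * s 0 - α * s 2) -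
      (β * t 2 * s 0 - α * s 2 * t 0) * (α - β) ≠ 0 := by
    have hfactor : (α * t 0 - β * t 2) * (β * s 0 - α * s 2) -
        (β * t 2 * s 0 - α * s 2 * t 0) * (α - β) =
          α * β * ((s 0 - s 2) * (t 0 - t 2)) := by ring
    rw [hfactor]
    exact mul_ne_zero (mul_ne_zero hα0 hβ0) (mul_ne_zero (hs' (by decide)) (ht' (by decide)))
  have hmem : ∀ i, (s i, t i) ∈ G := by
    intro i
    refine mem_mobiusGraph.2 ⟨mem_product.2 ⟨hsR i, htR i⟩, ?_⟩
    subst hα hβ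
    fin_cases i
    · simp only [Fin.zero_eta]; ring
    · simp only [Fin.mk_one]; ring
    · simp only [Fin.reduceFinMk]; ring
    · simp only [Fin.reduceFinMk]; linear_combination hcr
  refine ⟨G, mem_filter.2 ⟨mem_powerset.2 (mobiusGraph_subset _ _ _ _ _),
    ⟨_, _, _, _, hdet, rfl⟩, ?_⟩, hmem⟩
  have hfour : #(univ : Finset (Fin 4)) ≤ #G :=
    card_le_card_of_injOn (fun i => (s i, t i)) (fun i _ => hmem i)
      fun i _ j _ hij => hs (congrArg Prod.fst hij)
  exact le_trans (by simp) hfour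

theorem card_crossRatio_collisions_le (R : Finset K) :
    #{e ∈ injTuples 4 R ×ˢ injTuples 4 R | crossRatio e.1 = crossRatio e.2} ≤
      ∑ G ∈ mobiusGraphs R, #G ^ 4 := by
  calc _ ≤ #((mobiusGraphs R).biUnion fun G => Fintype.piFinset fun _ : Fin 4 => G) := by
        refine card_le_card_of_injOn (fun e i => (e.1 i, e.2 i)) (fun e he => ?_)
          fun e _ e' _ hee' => ?_
        · obtain ⟨hmem, hcr⟩ := mem_filter.1 he
          obtain ⟨G, hG, hGe⟩ := exists_mobiusGraph_of_crossRatio_eq (mem_product.1 hmem).1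
            (mem_product.1 hmem).2 hcr
          exact mem_biUnion.2 ⟨G, hG, Fintype.mem_piFinset.2 hGe⟩
        · exact Prod.ext (funext fun i => congrArg Prod.fst (congrFun hee' i))
            (funext fun i => congrArg Prod.snd (congrFun hee' i))
    _ ≤ ∑ G ∈ mobiusGraphs R, #(Fintype.piFinset fun _ : Fin 4 => G) := card_biUnion_le
    _ = _ := by simp

/-- The cross ratios of the quadruples of distinct elements of `R`. -/
noncomputable def crossRatios (R : Finset K) : Finset K := (injTuples 4 R).image crossRatio

theorem card_injTuples_sq_le (R : Finset K) :
    #(injTuples 4 R) ^ 2 ≤ #(crossRatios R) * ∑ G ∈ mobiusGraphs R, #G ^ 4 :=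
  (card_sq_le_card_image_mul (injTuples 4 R) crossRatio).trans
    (Nat.mul_le_mul_left _ (card_crossRatio_collisions_le R))

theorem card_sq_le_card_crossRatios [LinearOrder K] [IsStrictOrderedRing K] (hR : 6 ≤ #R) :
    #R ^ 2 ≤ 2 ^ 31 * #(crossRatios R) := by
  have htuples : #R ^ 4 ≤ 16 * #(injTuples 4 R) := by
    calc #R ^ 4 ≤ (2 * (#R + 1 - 4)) ^ 4 := Nat.pow_le_pow_left (by omega) 4
      _ = 16 * (#R + 1 - 4) ^ 4 := by ring
      _ ≤ 16 * #(injTuples 4 R) := Nat.mul_le_mul_left _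
        ((Nat.pow_sub_le_descFactorial #R 4).trans (descFactorial_le_card_injTuples 4 R))
  have henergy : #(injTuples 4 R) ^ 2 ≤ #(crossRatios R) * (2 ^ 23 * #R ^ 6) :=
    (card_injTuples_sq_le R).trans (Nat.mul_le_mul_left _ (sum_card_pow_four_mobiusGraphs_le R))
  refine Nat.le_of_mul_le_mul_left (?_ : #R ^ 6 * #R ^ 2 ≤ #R ^ 6 * _) (pow_pos (by omega) 6)
  calc #R ^ 6 * #R ^ 2 = (#R ^ 4) ^ 2 := by ring
    _ ≤ (16 * #(injTuples 4 R)) ^ 2 := Nat.pow_le_pow_left htuples 2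
    _ = 2 ^ 8 * #(injTuples 4 R) ^ 2 := by ring
    _ ≤ 2 ^ 8 * (#(crossRatios R) * (2 ^ 23 * #R ^ 6)) := Nat.mul_le_mul_left _ henergy
    _ = #R ^ 6 * (2 ^ 31 * #(crossRatios R)) := by ring

end CrossRatio

/-! ### The skew form on points of given slopes -/

section SkewForm

theorem omegaForm_swap (p q : ℝ × ℝ) : omegaForm q p = -omegaForm p q := by
  unfold omegaForm
  ring

theorem omegaForm_plucker (p : Fin 4 → ℝ × ℝ) :
    omegaForm (p 0) (p 1) * omegaForm (p 2) (p 3) +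
      omegaForm (p 1) (p 2) * omegaForm (p 0) (p 3) =
        omegaForm (p 0) (p 2) * omegaForm (p 1) (p 3) := by
  unfold omegaForm
  ring

theorem mem_Tset {P : Finset (ℝ × ℝ)} {p q : ℝ × ℝ} (hp : p ∈ P) (hq : q ∈ P)
    (hpq : omegaForm p q ≠ 0) : omegaForm p q ∈ Tset P :=
  mem_erase.2 ⟨hpq, mem_image.2 ⟨(p, q), mem_product.2 ⟨hp, hq⟩, rfl⟩⟩

/-- The slopes of the lines joining the points of `P` to the origin, measured against the second
axis: the slope of `p` is `p.1 / p.2`, so points on the first axis get the junk value `0`. -/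
noncomputable def slopes (P : Finset (ℝ × ℝ)) : Finset ℝ := P.image fun p => p.1 / p.2

/-- The points of `P` on the line through the origin of slope `s`. -/
noncomputable def pointsOfSlope (P : Finset (ℝ × ℝ)) (s : ℝ) : Finset (ℝ × ℝ) :=
  {p ∈ P | p.1 / p.2 = s}

variable {P : Finset (ℝ × ℝ)} {p p' q q' : ℝ × ℝ} {s t : ℝ} {n : ℕ}

theorem mem_pointsOfSlope : p ∈ pointsOfSlope P s ↔ p ∈ P ∧ p.1 / p.2 = s := mem_filter

theorem exists_mem_pointsOfSlope (hs : s ∈ slopes P) : ∃ p, p ∈ pointsOfSlope P s := by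
  obtain ⟨p, hp, rfl⟩ := mem_image.1 hs
  exact ⟨p, mem_pointsOfSlope.2 ⟨hp, rfl⟩⟩

theorem sum_card_pointsOfSlope (P : Finset (ℝ × ℝ)) : ∑ s ∈ slopes P, #(pointsOfSlope P s) = #P :=
  (card_eq_sum_card_image _ P).symm

theorem card_mul_le_card_of_le_card_pointsOfSlope {R : Finset ℝ}
    (hR : ∀ s ∈ R, n ≤ #(pointsOfSlope P s)) : #R * n ≤ #P := by
  refine (card_nsmul_le_sum R _ n hR).trans
    (sum_card_le_card_of_pairwiseDisjoint (fun s _ t _ hst => ?_) fun s _ => filter_subset _ _)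
  refine disjoint_left.2 fun p hp hp' => hst ?_
  rw [← (mem_pointsOfSlope.1 hp).2, ← (mem_pointsOfSlope.1 hp').2]

variable (hP : ∀ p ∈ P, p.2 ≠ 0)
include hP

theorem snd_ne_zero_of_mem_pointsOfSlope (hp : p ∈ pointsOfSlope P s) : p.2 ≠ 0 :=
  hP p (mem_pointsOfSlope.1 hp).1

theorem fst_eq_of_mem_pointsOfSlope (hp : p ∈ pointsOfSlope P s) : p.1 = s * p.2 :=
  (div_eq_iff (snd_ne_zero_of_mem_pointsOfSlope hP hp)).1 (mem_pointsOfSlope.1 hp).2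

theorem omegaForm_eq_mul_sub (hp : p ∈ pointsOfSlope P s) (hq : q ∈ pointsOfSlope P t) :
    omegaForm p q = p.2 * q.2 * (s - t) := by
  rw [omegaForm, fst_eq_of_mem_pointsOfSlope hP hp, fst_eq_of_mem_pointsOfSlope hP hq]
  ring

theorem omegaForm_ne_zero (hst : s ≠ t) (hp : p ∈ pointsOfSlope P s)
    (hq : q ∈ pointsOfSlope P t) : omegaForm p q ≠ 0 := by
  rw [omegaForm_eq_mul_sub hP hp hq]
  exact mul_ne_zero (mul_ne_zero (snd_ne_zero_of_mem_pointsOfSlope hP hp)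
    (snd_ne_zero_of_mem_pointsOfSlope hP hq)) (sub_ne_zero.2 hst)

theorem omegaForm_mem_Tset (hst : s ≠ t) (hp : p ∈ pointsOfSlope P s)
    (hq : q ∈ pointsOfSlope P t) : omegaForm p q ∈ Tset P :=
  mem_Tset (mem_pointsOfSlope.1 hp).1 (mem_pointsOfSlope.1 hq).1 (omegaForm_ne_zero hP hst hp hq)

theorem omegaForm_left_cancel (hst : s ≠ t) (hp : p ∈ pointsOfSlope P s)
    (hq : q ∈ pointsOfSlope P t) (hq' : q' ∈ pointsOfSlope P t)
    (h : omegaForm p q = omegaForm p q') : q = q' := by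
  rw [omegaForm_eq_mul_sub hP hp hq, omegaForm_eq_mul_sub hP hp hq'] at h
  have hsnd : q.2 = q'.2 := mul_left_cancel₀ (snd_ne_zero_of_mem_pointsOfSlope hP hp)
    (mul_right_cancel₀ (sub_ne_zero.2 hst) h)
  refine Prod.ext ?_ hsnd
  rw [fst_eq_of_mem_pointsOfSlope hP hq, fst_eq_of_mem_pointsOfSlope hP hq', hsnd]

theorem omegaForm_right_cancel (hst : s ≠ t) (hp : p ∈ pointsOfSlope P s)
    (hp' : p' ∈ pointsOfSlope P s) (hq : q ∈ pointsOfSlope P t)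
    (h : omegaForm p q = omegaForm p' q) : p = p' :=
  omegaForm_left_cancel hP hst.symm hq hp hp' (by rw [omegaForm_swap, h, ← omegaForm_swap])

theorem card_pointsOfSlope_le (hslopes : (slopes P).Nontrivial) (s : ℝ) :
    #(pointsOfSlope P s) ≤ #(Tset P) := by
  obtain ⟨t, ht, hts⟩ := hslopes.exists_ne s
  obtain ⟨q, hq⟩ := exists_mem_pointsOfSlope ht
  exact card_le_card_of_injOn (omegaForm · q)
    (fun p hp => omegaForm_mem_Tset hP hts.symm hp hq)
    fun p hp p' hp' => omegaForm_right_cancel hP hts.symm hp hp' hq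

theorem card_Tset_pos (hslopes : (slopes P).Nontrivial) : 0 < #(Tset P) := by
  obtain ⟨s, hs⟩ := hslopes.nonempty
  obtain ⟨p, hp⟩ := exists_mem_pointsOfSlope hs
  exact (card_pos.2 ⟨p, hp⟩).trans_le (card_pointsOfSlope_le hP hslopes s)

theorem card_image_sub_mul_le (hs : s ∈ slopes P) :
    #(P.image fun p => p.1 - s * p.2) ≤ #(Tset P) + 1 := by
  obtain ⟨w, hw⟩ := exists_mem_pointsOfSlope hs
  have hω : ∀ p, -w.2 * (p.1 - s * p.2) = omegaForm w p := fun p => by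
    rw [omegaForm, fst_eq_of_mem_pointsOfSlope hP hw]
    ring
  refine le_trans ?_ (card_insert_le 0 (Tset P))
  refine card_le_card_of_injOn (-w.2 * ·) (forall_mem_image.2 fun p hp => ?_)
    (mul_right_injective₀ (neg_ne_zero.2 (snd_ne_zero_of_mem_pointsOfSlope hP hw))).injOn
  dsimp only
  rw [hω, mem_coe, mem_insert, or_iff_not_imp_left]
  exact mem_Tset (mem_pointsOfSlope.1 hw).1 hp

theorem card_mul_card_slopes_le_card_Tset_sq (hslopes : (slopes P).Nontrivial) :
    #P * #(slopes P) ≤ 2 ^ 11 * #(Tset P) ^ 2 := by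
  have hT := card_Tset_pos hP hslopes
  calc #P * #(slopes P) ≤ 512 * (2 * #(Tset P)) ^ 2 :=
        card_mul_card_slopes_le
          (fun s hs => (card_image_sub_mul_le hP hs).trans (by omega))
          (one_lt_card_iff_nontrivial.2 hslopes) card_image_le
    _ = 2 ^ 11 * #(Tset P) ^ 2 := by ring

end SkewForm

/-! ### Incidences from quadruples of rich slopes -/

section RichSlopes

/-- The quotients with at least `n` representations by pairs of elements of `T`. -/
noncomputable def richRatios (T : Finset ℝ) (n : ℕ) : Finset ℝ :=
  richValues (fun a => a.1 / a.2) (T ×ˢ T) n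

/-- The values of `a * b / c` with at least `n ^ 2` representations by triples of elements
of `T`. -/
noncomputable def richProducts (T : Finset ℝ) (n : ℕ) : Finset ℝ :=
  richValues (fun a => a.1 * a.2.1 / a.2.2) (T ×ˢ T ×ˢ T) (n ^ 2)

theorem pow_three_mul_card_richRatios_product_richProducts_le (T : Finset ℝ) (n : ℕ) :
    n ^ 3 * #(richRatios T n ×ˢ richProducts T n) ≤ #T ^ 5 := by
  have hratios : n * #(richRatios T n) ≤ #(T ×ˢ T) := mul_card_richValues_le _ _ _
  have hproducts : n ^ 2 * #(richProducts T n) ≤ #(T ×ˢ T ×ˢ T) := mul_card_richValues_le _ _ _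
  rw [card_product] at hratios
  rw [card_product, card_product] at hproducts
  calc n ^ 3 * #(richRatios T n ×ˢ richProducts T n)
      = n * #(richRatios T n) * (n ^ 2 * #(richProducts T n)) := by rw [card_product]; ring
    _ ≤ #T * #T * (#T * (#T * #T)) := Nat.mul_le_mul hratios hproducts
    _ = #T ^ 5 := by ring

/-- The Plücker relation divided by `ω(p 0, p 3)`, read as the incidence of the point
`(ω(p 0, p 1), ω(p 1, p 2))` with the line given by the other values of the form. -/
noncomputable def pluckerIncidence (p : Fin 4 → ℝ × ℝ) : (ℝ × ℝ) × (ℝ × ℝ) :=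
  ((omegaForm (p 0) (p 1), omegaForm (p 1) (p 2)),
    (omegaForm (p 2) (p 3) / omegaForm (p 0) (p 3),
      omegaForm (p 0) (p 2) * omegaForm (p 1) (p 3) / omegaForm (p 0) (p 3)))

variable {P : Finset (ℝ × ℝ)} {s : Fin 4 → ℝ} {p p' : Fin 4 → ℝ × ℝ} {n : ℕ}
  (hP : ∀ p ∈ P, p.2 ≠ 0)
include hP

-- Scaling `p 3` does not change the ratio, so each point of its slope gives a representation.
theorem omegaForm_div_mem_richRatios (hs : Function.Injective s)
    (hp : ∀ i, p i ∈ pointsOfSlope P (s i)) (hn : n ≤ #(pointsOfSlope P (s 3))) :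
    omegaForm (p 2) (p 3) / omegaForm (p 0) (p 3) ∈ richRatios (Tset P) n := by
  have h03 : s 0 ≠ s 3 := hs.ne (by decide)
  have h23 : s 2 ≠ s 3 := hs.ne (by decide)
  refine mem_richValues_of_le_card (b := (omegaForm (p 2) (p 3), omegaForm (p 0) (p 3)))
    (mem_product.2 ⟨omegaForm_mem_Tset hP h23 (hp 2) (hp 3),
      omegaForm_mem_Tset hP h03 (hp 0) (hp 3)⟩) (hn.trans ?_)
  refine card_le_card_of_injOn (fun w => (omegaForm (p 2) w, omegaForm (p 0) w))
    (fun w hw => mem_filter.2 ⟨mem_product.2 ⟨omegaForm_mem_Tset hP h23 (hp 2) hw,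
      omegaForm_mem_Tset hP h03 (hp 0) hw⟩, ?_⟩)
    fun w hw w' hw' h => omegaForm_left_cancel hP h23 (hp 2) hw hw' (congrArg Prod.fst h)
  rw [div_eq_div_iff (omegaForm_ne_zero hP h03 (hp 0) hw)
    (omegaForm_ne_zero hP h03 (hp 0) (hp 3))]
  simp only [omegaForm_eq_mul_sub hP (hp _) hw, omegaForm_eq_mul_sub hP (hp _) (hp 3)]
  ring

-- Scaling `p 0` and `p 3` does not change the value.
theorem omegaForm_mul_div_mem_richProducts (hs : Function.Injective s)
    (hp : ∀ i, p i ∈ pointsOfSlope P (s i)) (hn₀ : n ≤ #(pointsOfSlope P (s 0)))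
    (hn₃ : n ≤ #(pointsOfSlope P (s 3))) :
    omegaForm (p 0) (p 2) * omegaForm (p 1) (p 3) / omegaForm (p 0) (p 3) ∈
      richProducts (Tset P) n := by
  have h02 : s 0 ≠ s 2 := hs.ne (by decide)
  have h03 : s 0 ≠ s 3 := hs.ne (by decide)
  have h13 : s 1 ≠ s 3 := hs.ne (by decide)
  have hpairs : n ^ 2 ≤ #(pointsOfSlope P (s 0) ×ˢ pointsOfSlope P (s 3)) := by
    rw [card_product, sq]
    exact Nat.mul_le_mul hn₀ hn₃
  have hmem : ∀ v ∈ pointsOfSlope P (s 0), ∀ w ∈ pointsOfSlope P (s 3),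
      (omegaForm v (p 2), omegaForm (p 1) w, omegaForm v w) ∈ Tset P ×ˢ Tset P ×ˢ Tset P :=
    fun v hv w hw => mem_product.2 ⟨omegaForm_mem_Tset hP h02 hv (hp 2), mem_product.2
      ⟨omegaForm_mem_Tset hP h13 (hp 1) hw, omegaForm_mem_Tset hP h03 hv hw⟩⟩
  refine mem_richValues_of_le_card (hmem _ (hp 0) _ (hp 3)) (hpairs.trans ?_)
  refine card_le_card_of_injOn
    (fun v => (omegaForm v.1 (p 2), omegaForm (p 1) v.2, omegaForm v.1 v.2)) ?_ ?_
  · rintro ⟨v, w⟩ hvw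
    obtain ⟨hv, hw⟩ := mem_product.1 hvw
    refine mem_filter.2 ⟨hmem v hv w hw, ?_⟩
    dsimp only
    rw [div_eq_div_iff (omegaForm_ne_zero hP h03 hv hw)
      (omegaForm_ne_zero hP h03 (hp 0) (hp 3)), omegaForm_eq_mul_sub hP hv (hp 2),
      omegaForm_eq_mul_sub hP (hp 1) hw, omegaForm_eq_mul_sub hP hv hw]
    simp only [omegaForm_eq_mul_sub hP (hp _) (hp _)]
    ring
  · rintro ⟨v, w⟩ hvw ⟨v', w'⟩ hvw' h
    obtain ⟨hv, hw⟩ := mem_product.1 hvw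
    obtain ⟨hv', hw'⟩ := mem_product.1 hvw'
    obtain ⟨hvp, hpw, -⟩ : _ ∧ _ ∧ _ := by simpa only [Prod.mk.injEq] using h
    exact Prod.ext (omegaForm_right_cancel hP h02 hv hv' (hp 2) hvp)
      (omegaForm_left_cancel hP h13 (hp 1) hw hw' hpw)

theorem pluckerIncidence_mem_gridIncidences (hs : Function.Injective s)
    (hp : ∀ i, p i ∈ pointsOfSlope P (s i)) (hn : ∀ i, n ≤ #(pointsOfSlope P (s i))) :
    pluckerIncidence p ∈
      gridIncidences (Tset P) (richRatios (Tset P) n ×ˢ richProducts (Tset P) n) := by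
  have hline : omegaForm (p 0) (p 1) * (omegaForm (p 2) (p 3) / omegaForm (p 0) (p 3)) +
      omegaForm (p 1) (p 2) =
        omegaForm (p 0) (p 2) * omegaForm (p 1) (p 3) / omegaForm (p 0) (p 3) := by
    have h03 : omegaForm (p 0) (p 3) ≠ 0 :=
      omegaForm_ne_zero hP (hs.ne (by decide)) (hp 0) (hp 3)
    rw [← omegaForm_plucker p]
    field_simp
  exact mem_filter.2 ⟨mem_product.2
    ⟨mem_product.2 ⟨omegaForm_mem_Tset hP (hs.ne (by decide)) (hp 0) (hp 1),
      omegaForm_mem_Tset hP (hs.ne (by decide)) (hp 1) (hp 2)⟩,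
    mem_product.2 ⟨omegaForm_div_mem_richRatios hP hs hp (hn 3),
      omegaForm_mul_div_mem_richProducts hP hs hp (hn 0) (hn 3)⟩⟩, hline⟩

theorem crossRatio_eq_of_pluckerIncidence (hp : ∀ i, p i ∈ pointsOfSlope P (s i)) :
    (pluckerIncidence p).1.1 * (pluckerIncidence p).2.1 / (pluckerIncidence p).1.2 =
      crossRatio s := by
  have hp0 := fun i => snd_ne_zero_of_mem_pointsOfSlope hP (hp i)
  simp only [pluckerIncidence, crossRatio, omegaForm_eq_mul_sub hP (hp _) (hp _)]
  field [hp0 0, hp0 1, hp0 2, hp0 3]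

theorem eq_of_pluckerIncidence_eq (hs : Function.Injective s)
    (hp : ∀ i, p i ∈ pointsOfSlope P (s i)) (hp' : ∀ i, p' i ∈ pointsOfSlope P (s i))
    (h₁ : p 1 = p' 1) (h : pluckerIncidence p = pluckerIncidence p') :
    p 0 = p' 0 ∧ p 2 = p' 2 := by
  have h01 : omegaForm (p 0) (p 1) = omegaForm (p' 0) (p' 1) := congrArg (·.1.1) h
  have h12 : omegaForm (p 1) (p 2) = omegaForm (p' 1) (p' 2) := congrArg (·.1.2) h
  rw [← h₁] at h01 h12
  exact ⟨omegaForm_right_cancel hP (hs.ne (by decide)) (hp 0) (hp' 0) (hp 1) h01,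
    omegaForm_left_cancel hP (hs.ne (by decide)) (hp 1) (hp 2) (hp' 2) h12⟩

theorem sq_le_card_gridIncidences_of_crossRatio (hs : Function.Injective s) (hn0 : 0 < n)
    (hn : ∀ i, n ≤ #(pointsOfSlope P (s i))) :
    n ^ 2 ≤ #{e ∈ gridIncidences (Tset P) (richRatios (Tset P) n ×ˢ richProducts (Tset P) n) |
      e.1.1 * e.2.1 / e.1.2 = crossRatio s} := by
  choose w hw using fun i => card_pos.1 (hn0.trans_le (hn i))
  have hmem : ∀ v ∈ pointsOfSlope P (s 0) ×ˢ pointsOfSlope P (s 2),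
      ∀ i, ![v.1, w 1, v.2, w 3] i ∈ pointsOfSlope P (s i) := by
    intro v hv i
    obtain ⟨hv0, hv2⟩ := mem_product.1 hv
    fin_cases i
    exacts [hv0, hw 1, hv2, hw 3]
  calc n ^ 2 ≤ #(pointsOfSlope P (s 0) ×ˢ pointsOfSlope P (s 2)) := by
        rw [card_product, sq]
        exact Nat.mul_le_mul (hn 0) (hn 2)
    _ ≤ _ := card_le_card_of_injOn (fun v => pluckerIncidence ![v.1, w 1, v.2, w 3])
        (fun v hv => mem_filter.2
          ⟨pluckerIncidence_mem_gridIncidences hP hs (hmem v hv) hn,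
            crossRatio_eq_of_pluckerIncidence hP (hmem v hv)⟩)
        fun v hv v' hv' h =>
          have hvv' := eq_of_pluckerIncidence_eq hP hs (hmem v hv) (hmem v' hv') rfl h
          Prod.ext hvv'.1 hvv'.2

theorem card_crossRatios_mul_sq_le_card_gridIncidences {R : Finset ℝ} (hn0 : 0 < n)
    (hR : ∀ s ∈ R, n ≤ #(pointsOfSlope P s)) :
    #(crossRatios R) * n ^ 2 ≤
      #(gridIncidences (Tset P) (richRatios (Tset P) n ×ˢ richProducts (Tset P) n)) := by
  refine (card_nsmul_le_sum (crossRatios R) (fun x =>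
    #{e ∈ gridIncidences (Tset P) (richRatios (Tset P) n ×ˢ richProducts (Tset P) n) |
      e.1.1 * e.2.1 / e.1.2 = x}) _ fun x hx => ?_).trans
    (sum_card_le_card_of_pairwiseDisjoint (fun x _ y _ hxy => ?_) fun x _ => filter_subset _ _)
  · obtain ⟨s, hs, rfl⟩ := mem_image.1 hx
    obtain ⟨hsR, hs⟩ := mem_injTuples.1 hs
    exact sq_le_card_gridIncidences_of_crossRatio hP hs hn0 fun i => hR _ (hsR i)
  · exact disjoint_left.2 fun e he he' =>
      hxy ((mem_filter.1 he).2.symm.trans (mem_filter.1 he').2)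

end RichSlopes

/-! ### The lower bound for the number of values -/

section Bound

variable {P : Finset (ℝ × ℝ)} {R : Finset ℝ} {n : ℕ} (hP : ∀ p ∈ P, p.2 ≠ 0)
include hP

theorem card_sq_mul_sq_le_card_gridIncidences (hn0 : 0 < n) (hcard : 6 ≤ #R)
    (hR : ∀ s ∈ R, n ≤ #(pointsOfSlope P s)) :
    #R ^ 2 * n ^ 2 ≤ 2 ^ 31 *
      #(gridIncidences (Tset P) (richRatios (Tset P) n ×ˢ richProducts (Tset P) n)) := by
  calc #R ^ 2 * n ^ 2 ≤ 2 ^ 31 * #(crossRatios R) * n ^ 2 :=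
        Nat.mul_le_mul_right _ (card_sq_le_card_crossRatios hcard)
    _ = 2 ^ 31 * (#(crossRatios R) * n ^ 2) := mul_assoc _ _ _
    _ ≤ _ := Nat.mul_le_mul_left _
      (card_crossRatios_mul_sq_le_card_gridIncidences hP hn0 hR)

variable (hslopes : (slopes P).Nontrivial)
include hslopes

theorem card_mul_le_card_Tset_sq (hR : ∀ s ∈ R, n ≤ #(pointsOfSlope P s)) :
    #R * n ≤ 2 ^ 11 * #(Tset P) ^ 2 :=
  calc #R * n ≤ #P := card_mul_le_card_of_le_card_pointsOfSlope hR
    _ ≤ #P * #(slopes P) := Nat.le_mul_of_pos_right _ (card_pos.2 hslopes.nonempty)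
    _ ≤ 2 ^ 11 * #(Tset P) ^ 2 := card_mul_card_slopes_le_card_Tset_sq hP hslopes

theorem pow_six_mul_card_pow_three_le_of_six_le_card (hn0 : 0 < n) (hcard : 6 ≤ #R)
    (hR : ∀ s ∈ R, n ≤ #(pointsOfSlope P s)) :
    n ^ 6 * #R ^ 3 ≤ 2 ^ 51 * #(Tset P) ^ 7 := by
  obtain ⟨L, hL⟩ : ∃ L, L = richRatios (Tset P) n ×ˢ richProducts (Tset P) n := ⟨_, rfl⟩
  obtain ⟨I, hI⟩ : ∃ I, I = #(gridIncidences (Tset P) L) := ⟨_, rfl⟩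
  have hlines : n ^ 3 * #L ≤ #(Tset P) ^ 5 :=
    hL ▸ pow_three_mul_card_richRatios_product_richProducts_le _ _
  have hinc : #R ^ 2 * n ^ 2 ≤ 2 ^ 31 * I :=
    hI ▸ hL ▸ card_sq_mul_sq_le_card_gridIncidences hP hn0 hcard hR
  rcases hI ▸ card_gridIncidences_le_or (Tset P) L with hfew | hmany
  · calc n ^ 6 * #R ^ 3 = n ^ 3 * (#R ^ 2 * n ^ 2) * (#R * n) := by ring
      _ ≤ n ^ 3 * (2 ^ 31 * (4 * #L)) * (2 ^ 11 * #(Tset P) ^ 2) :=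
        Nat.mul_le_mul (Nat.mul_le_mul_left _ (hinc.trans (Nat.mul_le_mul_left _ hfew)))
          (card_mul_le_card_Tset_sq hP hslopes hR)
      _ = 2 ^ 44 * (n ^ 3 * #L) * #(Tset P) ^ 2 := by ring
      _ ≤ 2 ^ 51 * #(Tset P) ^ 5 * #(Tset P) ^ 2 := by gcongr <;> norm_num
      _ = 2 ^ 51 * #(Tset P) ^ 7 := by ring
  · refine (Nat.pow_le_pow_iff_left two_ne_zero).1 ?_
    calc (n ^ 6 * #R ^ 3) ^ 2 = n ^ 6 * (#R ^ 2 * n ^ 2) ^ 3 := by ring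
      _ ≤ n ^ 6 * (2 ^ 31 * I) ^ 3 := by gcongr
      _ = 2 ^ 93 * n ^ 6 * I ^ 3 := by ring
      _ ≤ 2 ^ 93 * n ^ 6 * (512 * #L ^ 2 * #(Tset P) ^ 4) := by gcongr
      _ = 2 ^ 102 * (n ^ 3 * #L) ^ 2 * #(Tset P) ^ 4 := by ring
      _ ≤ 2 ^ 102 * (#(Tset P) ^ 5) ^ 2 * #(Tset P) ^ 4 := by gcongr
      _ = (2 ^ 51 * #(Tset P) ^ 7) ^ 2 := by ring

theorem pow_six_mul_card_pow_three_le (hn0 : 0 < n) (hR : ∀ s ∈ R, n ≤ #(pointsOfSlope P s)) :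
    n ^ 6 * #R ^ 3 ≤ 2 ^ 51 * #(Tset P) ^ 7 := by
  rcases R.eq_empty_or_nonempty with rfl | ⟨s, hs⟩
  · simp
  rcases le_or_gt 6 #R with hcard | hcard
  · exact pow_six_mul_card_pow_three_le_of_six_le_card hP hslopes hn0 hcard hR
  have hnT : n ≤ #(Tset P) := (hR s hs).trans (card_pointsOfSlope_le hP hslopes s)
  have hT : 0 < #(Tset P) := card_Tset_pos hP hslopes
  calc n ^ 6 * #R ^ 3 ≤ #(Tset P) ^ 6 * 6 ^ 3 := by gcongr
    _ ≤ #(Tset P) ^ 7 * 2 ^ 51 :=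
      Nat.mul_le_mul (Nat.pow_le_pow_right hT (by norm_num)) (by norm_num)
    _ = 2 ^ 51 * #(Tset P) ^ 7 := mul_comm _ _

theorem card_pow_nine_le_of_snd_ne_zero : #P ^ 9 ≤ 2 ^ 93 * #(Tset P) ^ 13 := by
  obtain ⟨T, hT⟩ : ∃ T : ℝ, T = #(Tset P) := ⟨_, rfl⟩
  have hT0 : 0 ≤ T := hT ▸ Nat.cast_nonneg _
  obtain ⟨B, hB0, hB⟩ : ∃ B : ℝ, 0 ≤ B ∧ B ^ 3 = 2 ^ 51 * T ^ 7 :=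
    ⟨_, Real.rpow_nonneg (by positivity) _,
      Real.rpow_inv_natCast_pow (by positivity) three_ne_zero⟩
  have hrich : ∀ n : ℕ, 1 ≤ n →
      (n : ℝ) ^ 2 * #{s ∈ slopes P | n ≤ #(pointsOfSlope P s)} ≤ B := by
    intro n hn
    refine le_of_pow_le_pow_left₀ three_ne_zero hB0 ?_
    rw [hB, hT, mul_pow, ← pow_mul]
    exact_mod_cast pow_six_mul_card_pow_three_le hP hslopes hn fun s hs => (mem_filter.1 hs).2
  have hsq : (#P : ℝ) ^ 2 ≤ 8 * B * #(slopes P) := by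
    have := sum_sq_le_of_card_superlevel_le hrich
    rwa [sum_card_pointsOfSlope] at this
  have hdirections : (#P : ℝ) * #(slopes P) ≤ 2 ^ 11 * T ^ 2 := by
    rw [hT]
    exact_mod_cast card_mul_card_slopes_le_card_Tset_sq hP hslopes
  have hcube : (#P : ℝ) ^ 3 ≤ 2 ^ 14 * B * T ^ 2 := by
    calc (#P : ℝ) ^ 3 = #P * #P ^ 2 := by ring
      _ ≤ #P * (8 * B * #(slopes P)) := by gcongr
      _ = 8 * B * (#P * #(slopes P)) := by ring
      _ ≤ 8 * B * (2 ^ 11 * T ^ 2) := by gcongr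
      _ = 2 ^ 14 * B * T ^ 2 := by ring
  have hninth : (#P : ℝ) ^ 9 ≤ 2 ^ 93 * T ^ 13 := by
    calc (#P : ℝ) ^ 9 = (#P ^ 3) ^ 3 := by ring
      _ ≤ (2 ^ 14 * B * T ^ 2) ^ 3 := by gcongr
      _ = 2 ^ 42 * B ^ 3 * T ^ 6 := by ring
      _ = 2 ^ 93 * T ^ 13 := by rw [hB]; ring
  rw [hT] at hninth
  exact_mod_cast hninth

end Bound

section Shear

/-- The shear `(x, y) ↦ (x, y + l * x)`, which preserves the skew form. -/
def shear (l : ℝ) (p : ℝ × ℝ) : ℝ × ℝ := (p.1, p.2 + l * p.1)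

theorem omegaForm_shear (l : ℝ) (p q : ℝ × ℝ) :
    omegaForm (shear l p) (shear l q) = omegaForm p q := by
  simp only [omegaForm, shear]
  ring

theorem shear_injective (l : ℝ) : Function.Injective (shear l) := by
  intro p q h
  obtain ⟨hfst, hsnd⟩ := Prod.mk.inj h
  rw [hfst] at hsnd
  exact Prod.ext hfst (add_right_cancel hsnd)

theorem Tset_image_shear (l : ℝ) (P : Finset (ℝ × ℝ)) : Tset (P.image (shear l)) = Tset P := by
  rw [Tset, Tset, ← prodMap_image_product, image_image]
  exact congrArg (Finset.erase · 0) (image_congr fun e _ => omegaForm_shear l e.1 e.2)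

variable {P : Finset (ℝ × ℝ)}

theorem exists_shear_snd_ne_zero (hP : ∀ p ∈ P, p ≠ 0) :
    ∃ l, ∀ p ∈ P.image (shear l), p.2 ≠ 0 := by
  obtain ⟨l, hl⟩ := Infinite.exists_notMem_finset (P.image fun p => -p.2 / p.1)
  refine ⟨l, forall_mem_image.2 fun p hp (hzero : p.2 + l * p.1 = 0) => ?_⟩
  by_cases hfst : p.1 = 0
  · rw [hfst, mul_zero, add_zero] at hzero
    exact hP p hp (Prod.ext hfst hzero)
  · refine hl (mem_image.2 ⟨p, hp, ?_⟩)
    rw [div_eq_iff hfst]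
    linarith

theorem nontrivial_slopes_image_shear {l : ℝ} (hl : ∀ p ∈ P.image (shear l), p.2 ≠ 0)
    (hline : ¬ ∃ u : ℝ × ℝ, u ≠ 0 ∧ ∀ p ∈ P, ∃ t : ℝ, p = t • u) :
    (slopes (P.image (shear l))).Nontrivial := by
  by_contra hsub
  rw [← one_lt_card_iff_nontrivial, not_lt, card_le_one_iff_subset_singleton] at hsub
  obtain ⟨s, hs⟩ := hsub
  have hs : ∀ p ∈ P, (shear l p).1 / (shear l p).2 = s := fun p hp =>
    mem_singleton.1 (hs (mem_image_of_mem _ (mem_image_of_mem _ hp)))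
  refine hline ⟨(s, 1 - l * s), ?_, fun p hp => ⟨(shear l p).2, ?_⟩⟩
  · intro hzero
    obtain ⟨rfl, h⟩ := Prod.mk.inj hzero
    norm_num at h
  · have hfst := (div_eq_iff (hl _ (mem_image_of_mem _ hp))).1 (hs p hp)
    simp only [shear] at hfst
    ext
    · simp only [shear, Prod.smul_mk, smul_eq_mul]
      linarith
    · simp only [shear, Prod.smul_mk, smul_eq_mul]
      linear_combination (-l) * hfst

theorem card_pow_nine_le (hP : ∀ p ∈ P, p ≠ 0)
    (hline : ¬ ∃ u : ℝ × ℝ, u ≠ 0 ∧ ∀ p ∈ P, ∃ t : ℝ, p = t • u) :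
    #P ^ 9 ≤ 2 ^ 93 * #(Tset P) ^ 13 := by
  obtain ⟨l, hl⟩ := exists_shear_snd_ne_zero hP
  rw [← Tset_image_shear l P, ← card_image_of_injective P (shear_injective l)]
  exact card_pow_nine_le_of_snd_ne_zero hl (nontrivial_slopes_image_shear hl hline)

end Shear

theorem stmt_0 :
    ∃ c : ℝ, 0 < c ∧
      ∀ P : Finset (ℝ × ℝ),
        (∀ p ∈ P, p ≠ (0 : ℝ × ℝ)) →
        (¬ ∃ u : ℝ × ℝ, u ≠ 0 ∧ ∀ p ∈ P, ∃ t : ℝ, p = t • u) →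
        c * (P.card : ℝ) ^ ((9 : ℝ) / 13) ≤ ((Tset P).card : ℝ) := by
  refine ⟨1 / 2 ^ 8, by positivity, fun P hP hline => ?_⟩
  have hninth : (#P : ℝ) ^ 9 ≤ 2 ^ 93 * (#(Tset P) : ℝ) ^ 13 := by
    exact_mod_cast card_pow_nine_le hP hline
  have hpow : ((#P : ℝ) ^ ((9 : ℝ) / 13)) ^ 13 = (#P : ℝ) ^ 9 := by
    rw [← Real.rpow_mul_natCast (by positivity), ← Real.rpow_natCast]
    norm_num
  refine le_of_pow_le_pow_left₀ (by norm_num : 13 ≠ 0) (by positivity) ?_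
  calc (1 / 2 ^ 8 * (#P : ℝ) ^ ((9 : ℝ) / 13)) ^ 13 = (1 / 2 ^ 8) ^ 13 * (#P : ℝ) ^ 9 := by
        rw [mul_pow, hpow]
    _ ≤ (1 / 2 ^ 8) ^ 13 * (2 ^ 93 * (#(Tset P) : ℝ) ^ 13) := by gcongr
    _ = 1 / 2 ^ 11 * (#(Tset P) : ℝ) ^ 13 := by ring
    _ ≤ (#(Tset P) : ℝ) ^ 13 := mul_le_of_le_one_left (by positivity) (by norm_num)
end

section
/- There exists an absolute constant c > 0 such that for every finite set A ⊆ ℝ \ {0} with |A| ≥ 2, one has |AA + AA| ≥ c·|A|^(19/12). -/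
open Finset
open scoped Pointwise

/-!
If `|A| ≥ 2`, at least a third of its elements have the same nonzero sign, so let `A` be positive.
Write `N = |A|`, `D = |A / A|`, `T = |AA + AA|`. For each slope `r ∈ A / A` pick a vector
`v r ∈ A × A` of slope `r`. The sums `x • v r + y • v s` with `x, y ∈ A` lie in `(AA + AA)²` and
in the open sector between the slopes `r` and `s`, and there are `N²` of them.

Cut `A / A` into clusters of `2 M` consecutive slopes and, within each, let `r` range over the lower
and `s` over the upper half. Different clusters give disjoint sectors. Within a cluster, a point
shared by two pairs of slopes gives a solution in `A` of `α x + β y = z` for some `α, β > 0`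
determined by the slopes. There are `O(N^(2/3) D)` such solutions, by an elementary incidence bound:
cut a grid into `m × m` boxes with `m ≍ N^(1/3)`; a line of positive slope meets few boxes, and two
points in a common box determine the line. By inclusion–exclusion `(D / M) M² N² ≪ T²` as long as
`M² N^(2/3) D ≪ N²`, and the largest such `M` yields `D N^(16/3) ≪ T⁴`. Conclude with `D ≥ N`.
-/

namespace SumOfProducts

section Blocks

variable {α : Type*} [LinearOrder α] (X : Finset α) (m : ℕ)

/-- The number of elements of `X` below `x`; on `X` itself this is the position of `x` in the
increasing enumeration, counted from `0`. -/
def rank (x : α) : ℕ := #{y ∈ X | y < x}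

/-- The `k`-th (from `0`) block of `m` consecutive elements of `X`. Only the blocks with
`(k + 1) * m ≤ #X` are full. -/
def block (k : ℕ) : Finset α := {x ∈ X | rank X x / m = k}

lemma rank_mono : Monotone (rank X) := fun _ _ hxy ↦
  card_le_card <| monotone_filter_right _ fun _ _ hz ↦ hz.trans_le hxy

lemma rank_strictMonoOn : StrictMonoOn (rank X) X := fun x hx _ _ hxy ↦
  card_lt_card <| (ssubset_iff_of_subset <|
    monotone_filter_right _ fun _ _ hz ↦ hz.trans hxy).2 ⟨x, by simp_all⟩

lemma rank_le_card (x : α) : rank X x ≤ #X := card_filter_le _ _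

lemma rank_div_mono : Monotone fun x ↦ rank X x / m := fun _ _ hxy ↦
  Nat.div_le_div_right (rank_mono X hxy)

lemma image_rank : X.image (rank X) = range #X := by
  refine eq_of_subset_of_card_le (image_subset_iff.2 fun x hx ↦ mem_range.2 ?_) ?_
  · exact card_lt_card (filter_ssubset.2 ⟨x, hx, lt_irrefl x⟩)
  · rw [card_range, card_image_of_injOn (rank_strictMonoOn X).injOn]

variable {m}

lemma card_block_eq_card_inter_Ico (hm : 0 < m) (k : ℕ) :
    #(block X m k) = #(range #X ∩ Ico (k * m) ((k + 1) * m)) := by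
  have hinj : Set.InjOn (rank X) (block X m k) :=
    (rank_strictMonoOn X).injOn.mono (coe_subset.2 (filter_subset _ _))
  rw [← card_image_of_injOn hinj, ← image_rank X]
  congr 1
  ext i
  have hdiv (r : ℕ) : r / m = k ↔ k * m ≤ r ∧ r < (k + 1) * m := by
    rw [Nat.div_eq_iff hm, add_one_mul]
    omega
  simp only [block, mem_image, mem_filter, mem_inter, mem_Ico, hdiv]
  grind

lemma card_block_le (hm : 0 < m) (k : ℕ) : #(block X m k) ≤ m := by
  rw [card_block_eq_card_inter_Ico X hm]
  exact (card_le_card inter_subset_right).trans (by simp [add_mul])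

lemma card_block (hm : 0 < m) {k : ℕ} (hk : (k + 1) * m ≤ #X) : #(block X m k) = m := by
  have hsub : Ico (k * m) ((k + 1) * m) ⊆ range #X := fun i hi ↦
    mem_range.2 ((mem_Ico.1 hi).2.trans_le hk)
  rw [card_block_eq_card_inter_Ico X hm, inter_eq_right.2 hsub]
  simp [add_mul]

variable {X} in
lemma lt_of_mem_block {k l : ℕ} (hkl : k < l) {x y : α} (hx : x ∈ block X m k)
    (hy : y ∈ block X m l) : x < y := by
  obtain ⟨-, rfl⟩ := mem_filter.1 hx
  obtain ⟨-, rfl⟩ := mem_filter.1 hy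
  exact (rank_div_mono X m).reflect_lt hkl

end Blocks

section Counting

lemma card_le_card_div_self {G : Type*} [GroupWithZero G] [DecidableEq G] {A : Finset G}
    (hA : (0 : G) ∉ A) : #A ≤ #(A / A) := by
  obtain rfl | ⟨a, ha⟩ := A.eq_empty_or_nonempty
  · simp
  · rw [div_eq_mul_inv]
    exact card_le_card_mul_right₀ (inv_mem_inv ha) (inv_ne_zero (ne_of_mem_of_not_mem ha hA))

lemma card_pow_le_of_card_le_one {R : Type*} [Mul R] [Add R] [DecidableEq R] {A : Finset R}
    (hA : #A ≤ 1) :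
    #A ^ 19 ≤ #(A * A + A * A) ^ 12 := by
  obtain rfl | hne := A.eq_empty_or_nonempty
  · simp
  · have hT : 0 < #(A * A + A * A) := ((hne.mul hne).add (hne.mul hne)).card_pos
    calc #A ^ 19 ≤ 1 ^ 19 := by gcongr
      _ = 1 ^ 12 := by norm_num
      _ ≤ #(A * A + A * A) ^ 12 := by gcongr; exact hT

lemma card_le_of_isChain_of_le {T : Finset (ℕ × ℕ)} (hT : IsChain (· ≤ ·) (T : Set (ℕ × ℕ)))
    {a b : ℕ} (hbound : ∀ t ∈ T, t ≤ (a, b)) : #T ≤ a + b + 1 := by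
  have hmaps : Set.MapsTo (fun t ↦ t.1 + t.2) (T : Set (ℕ × ℕ)) (range (a + b + 1)) := by
    intro t ht
    have := Prod.le_def.1 (hbound t ht)
    simp only [coe_range, Set.mem_Iio]
    omega
  have hinj : Set.InjOn (fun t ↦ t.1 + t.2) (T : Set (ℕ × ℕ)) := by
    intro t ht u hu htu
    have := hT.total ht hu
    simp only [Prod.le_def] at this htu
    ext <;> omega
  simpa using card_le_card_of_injOn _ hmaps hinj

lemma card_le_card_image_add_card_collisions {α β : Type*} [DecidableEq β]
    (T : Finset α) (f : α → β) :
    #T ≤ #(T.image f) + #{p ∈ T.offDiag | f p.1 = f p.2} := by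
  have hfiber (b : β) : #{x ∈ T | f x = b} ≤ 1 + #({x ∈ T | f x = b}.offDiag) := by
    rw [offDiag_card]
    have : #{x ∈ T | f x = b} ≤ 1 ∨ 2 * #{x ∈ T | f x = b} ≤ #{x ∈ T | f x = b} ^ 2 := by
      by_contra! h
      nlinarith
    rw [← sq]
    omega
  have hcollisions : #{p ∈ T.offDiag | f p.1 = f p.2} =
      ∑ b ∈ T.image f, #({x ∈ T | f x = b}.offDiag) := by
    rw [card_eq_sum_card_fiberwise (f := fun p ↦ f p.1) (t := T.image f)]
    · refine sum_congr rfl fun b _ ↦ congrArg card ?_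
      ext p
      simp only [mem_filter, mem_offDiag]
      grind
    · intro p hp
      simp only [coe_filter, mem_offDiag, Set.mem_ofPred_eq] at hp
      exact mem_coe.2 (mem_image_of_mem f hp.1.1)
  calc #T = ∑ b ∈ T.image f, #{x ∈ T | f x = b} := card_eq_sum_card_image f T
    _ ≤ ∑ b ∈ T.image f, (1 + #({x ∈ T | f x = b}.offDiag)) := sum_le_sum fun b _ ↦ hfiber b
    _ = _ := by rw [sum_add_distrib, ← hcollisions, ← card_eq_sum_ones]

-- Unlike with the cruder `#I ^ 2`, the last term vanishes for a single set.
lemma card_mul_le_card_biUnion_add {ι γ : Type*} [DecidableEq γ] {I : Finset ι}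
    {E : ι → Finset γ} {n s : ℕ} (hcard : ∀ i ∈ I, n ≤ #(E i))
    (hinter : (I : Set ι).Pairwise fun i j ↦ #(E i ∩ E j) ≤ s) :
    #I * n ≤ #(I.biUnion E) + #I * (#I - 1) * s := by
  classical
  induction I using Finset.induction_on with
  | empty => simp
  | insert a I ha ih =>
    have ih := ih (fun i hi ↦ hcard i (mem_insert_of_mem hi))
      (hinter.mono (coe_subset.2 (subset_insert a I)))
    have hoverlap : #(E a ∩ I.biUnion E) ≤ #I * s := by
      rw [inter_biUnion]
      refine card_biUnion_le_card_mul _ _ _ fun i hi ↦ ?_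
      exact hinter (mem_insert_self a I) (mem_insert_of_mem hi) (ne_of_mem_of_not_mem hi ha).symm
    have hunion := card_union_add_card_inter (E a) (I.biUnion E)
    have ha_card := hcard a (mem_insert_self a I)
    rw [card_insert_of_notMem ha, biUnion_insert, Nat.add_sub_cancel]
    have hpairs : #I * (#I - 1) * s + #I * s ≤ (#I + 1) * #I * s := by
      rw [← add_mul]
      gcongr
      have : #I * (#I - 1) ≤ #I * #I := by gcongr; omega
      linarith
    linarith

end Counting

section Incidences

variable {ι α β : Type*} [LinearOrder α] [LinearOrder β] (X : Finset α) (Y : Finset β) {m : ℕ}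

/-- The cell containing `p` when the grid `X × Y` is cut into `m × m` boxes of consecutive rows and
columns. -/
def cell (m : ℕ) (p : α × β) : ℕ × ℕ := (rank X p.1 / m, rank Y p.2 / m)

lemma cell_mono : Monotone (cell X Y m) := fun _ _ hpq ↦
  ⟨rank_div_mono X m hpq.1, rank_div_mono Y m hpq.2⟩

lemma card_image_cell_le_of_isChain {S : Finset (α × β)}
    (hS : IsChain (· ≤ ·) (S : Set (α × β))) :
    #(S.image (cell X Y m)) ≤ #X / m + #Y / m + 1 := by
  refine card_le_of_isChain_of_le ?_ fun t ht ↦ ?_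
  · rw [coe_image]
    exact hS.image_of_map_rel _ _ _ fun _ _ h ↦ cell_mono X Y h
  · obtain ⟨p, -, rfl⟩ := mem_image.1 ht
    exact ⟨Nat.div_le_div_right (rank_le_card X p.1), Nat.div_le_div_right (rank_le_card Y p.2)⟩

lemma card_pairs_same_cell_le (hm : 0 < m) :
    #{t ∈ (X ×ˢ Y) ×ˢ (X ×ˢ Y) | cell X Y m t.1 = cell X Y m t.2} ≤ #X * #Y * m ^ 2 := by
  have hcell (p : α × β) : #{q ∈ X ×ˢ Y | cell X Y m p = cell X Y m q} ≤ m ^ 2 := by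
    have hsub : {q ∈ X ×ˢ Y | cell X Y m p = cell X Y m q} ⊆
        block X m (cell X Y m p).1 ×ˢ block Y m (cell X Y m p).2 := by
      intro q
      simp only [block, cell, mem_filter, mem_product, Prod.mk.injEq]
      grind
    refine (card_le_card hsub).trans ?_
    rw [card_product, sq]
    exact Nat.mul_le_mul (card_block_le X hm _) (card_block_le Y hm _)
  calc _ = ∑ p ∈ X ×ˢ Y, #{q ∈ X ×ˢ Y | cell X Y m p = cell X Y m q} := by
        simp only [card_filter, sum_product]
    _ ≤ ∑ _p ∈ X ×ˢ Y, m ^ 2 := sum_le_sum fun p _ ↦ hcell p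
    _ = #X * #Y * m ^ 2 := by simp

variable {X Y}

theorem sum_card_le_of_isChain_of_pairwise_inter_le_one {L : Finset ι} {S : ι → Finset (α × β)}
    (hgrid : ∀ l ∈ L, S l ⊆ X ×ˢ Y) (hchain : ∀ l ∈ L, IsChain (· ≤ ·) (S l : Set (α × β)))
    (hinter : (L : Set ι).Pairwise fun l l' ↦ #(S l ∩ S l') ≤ 1) (hm : 0 < m) :
    ∑ l ∈ L, #(S l) ≤ #L * (#X / m + #Y / m + 1) + #X * #Y * m ^ 2 := by
  let collisions (l : ι) := {t ∈ (S l).offDiag | cell X Y m t.1 = cell X Y m t.2}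
  have hdisj : (L : Set ι).PairwiseDisjoint collisions := by
    intro l hl l' hl' hne
    refine Finset.disjoint_left.2 fun t ht ht' ↦ ?_
    simp only [collisions, mem_filter, mem_offDiag] at ht ht'
    exact ht.1.2.2 (card_le_one.1 (hinter hl hl' hne) _ (mem_inter.2 ⟨ht.1.1, ht'.1.1⟩) _
      (mem_inter.2 ⟨ht.1.2.1, ht'.1.2.1⟩))
  have hcollisions : ∑ l ∈ L, #(collisions l) ≤ #X * #Y * m ^ 2 := by
    rw [← card_biUnion hdisj]
    refine (card_le_card ?_).trans (card_pairs_same_cell_le X Y hm)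
    refine biUnion_subset.2 fun l hl t ht ↦ ?_
    simp only [collisions, mem_filter, mem_offDiag] at ht
    exact mem_filter.2 ⟨mem_product.2 ⟨hgrid l hl ht.1.1, hgrid l hl ht.1.2.1⟩, ht.2⟩
  calc ∑ l ∈ L, #(S l)
      ≤ ∑ l ∈ L, (#X / m + #Y / m + 1 + #(collisions l)) := sum_le_sum fun l hl ↦
        (card_le_card_image_add_card_collisions (S l) (cell X Y m)).trans
          (Nat.add_le_add_right (card_image_cell_le_of_isChain X Y (hchain l hl)) _)
    _ = #L * (#X / m + #Y / m + 1) + ∑ l ∈ L, #(collisions l) := by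
        rw [sum_add_distrib, sum_const, smul_eq_mul]
    _ ≤ #L * (#X / m + #Y / m + 1) + #X * #Y * m ^ 2 := by gcongr

end Incidences

section Lines

variable {K : Type*} [Field K] [DecidableEq K]

/-- The points of the grid `X × Y` on the line `y = k x + t`. -/
def pointsOnLine (X Y : Finset K) (k t : K) : Finset (K × K) :=
  {p ∈ X ×ˢ Y | p.2 = k * p.1 + t}

/-- The pairs `(x, y) ∈ A × B` with `α x + β y ∈ C`, that is, the solutions of `α x + β y = z` with
`x ∈ A`, `y ∈ B`, `z ∈ C`. -/
def linearSolutions (A B C : Finset K) (α β : K) : Finset (K × K) :=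
  {p ∈ A ×ˢ B | α * p.1 + β * p.2 ∈ C}

lemma card_pointsOnLine_inter_le_one (X Y : Finset K) {k t k' t' : K} (hne : (k, t) ≠ (k', t')) :
    #(pointsOnLine X Y k t ∩ pointsOnLine X Y k' t') ≤ 1 := by
  refine card_le_one.2 fun p hp q hq ↦ ?_
  simp only [pointsOnLine, mem_inter, mem_filter] at hp hq
  obtain ⟨⟨-, hp⟩, -, hp'⟩ := hp
  obtain ⟨⟨-, hq⟩, -, hq'⟩ := hq
  have hk : k ≠ k' := by
    rintro rfl
    exact hne (Prod.ext rfl (add_left_cancel (hp.symm.trans hp')))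
  have hx : p.1 = q.1 := mul_left_cancel₀ (sub_ne_zero.2 hk) (by
    linear_combination hp' - hp - (hq' - hq))
  exact Prod.ext hx (by rw [hp, hq, hx])

end Lines

section LinearSolutions

variable {K : Type*} [Field K] [LinearOrder K] [IsStrictOrderedRing K] {A : Finset K} {α β : K}
  {m : ℕ}

lemma isChain_pointsOnLine (X Y : Finset K) {k : K} (hk : 0 ≤ k) (t : K) :
    IsChain (· ≤ ·) (pointsOnLine X Y k t : Set (K × K)) := by
  have hmono {p q : K × K} (hp : p ∈ pointsOnLine X Y k t) (hq : q ∈ pointsOnLine X Y k t)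
      (hpq : p.1 ≤ q.1) : p ≤ q := by
    refine ⟨hpq, ?_⟩
    rw [(mem_filter.1 hp).2, (mem_filter.1 hq).2]
    gcongr
  intro p hp q hq _
  exact (le_total p.1 q.1).imp (hmono hp hq) (hmono hq hp)

-- Each solution of `α y + β z = x` is written in `#A` ways as the incidence of the point
-- `(y / a, x)` with the line of slope `α a` and intercept `β z`.
lemma card_mul_card_linearSolutions_le (B C : Finset K) (hA : ∀ a ∈ A, 0 < a) (hα : 0 < α)
    (hβ : β ≠ 0) (hm : 0 < m) :
    #A * #(linearSolutions A B C α β) ≤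
      #A * #B * (#(A / A) / m + #C / m + 1) + #(A / A) * #C * m ^ 2 := by
  let S (l : K × K) := pointsOnLine (A / A) C (α * l.1) (β * l.2)
  have hinter : ((A ×ˢ B : Finset (K × K)) : Set (K × K)).Pairwise
      fun l l' ↦ #(S l ∩ S l') ≤ 1 := fun l _ l' _ hne ↦
    card_pointsOnLine_inter_le_one _ _ fun h ↦ hne <| Prod.ext
      (mul_left_cancel₀ hα.ne' (congrArg Prod.fst h)) (mul_left_cancel₀ hβ (congrArg Prod.snd h))
  have hincidences : ∀ a ∈ A, ∀ z ∈ B, #{y ∈ A | α * y + β * z ∈ C} ≤ #(S (a, z)) := by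
    intro a ha z _
    have ha0 := (hA a ha).ne'
    refine card_le_card_of_injOn (fun y ↦ (y / a, α * y + β * z)) (fun y hy ↦ ?_) ?_
    · obtain ⟨hy, hx⟩ := mem_filter.1 hy
      refine mem_filter.2 ⟨mem_product.2 ⟨div_mem_div hy ha, hx⟩, ?_⟩
      simp only
      field_simp
    · intro y _ y' _ h
      exact (div_left_inj' ha0).1 (congrArg Prod.fst h)
  calc #A * #(linearSolutions A B C α β)
      = ∑ _a ∈ A, ∑ z ∈ B, #{y ∈ A | α * y + β * z ∈ C} := by
        rw [sum_const, smul_eq_mul, linearSolutions]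
        simp only [card_filter, sum_product_right]
    _ ≤ ∑ a ∈ A, ∑ z ∈ B, #(S (a, z)) :=
        sum_le_sum fun a ha ↦ sum_le_sum fun z hz ↦ hincidences a ha z hz
    _ = ∑ l ∈ A ×ˢ B, #(S l) := by rw [sum_product]
    _ ≤ #(A ×ˢ B) * (#(A / A) / m + #C / m + 1) + #(A / A) * #C * m ^ 2 :=
        sum_card_le_of_isChain_of_pairwise_inter_le_one (fun l _ ↦ filter_subset _ _)
          (fun l hl ↦ isChain_pointsOnLine _ _
            (mul_pos hα (hA _ (mem_product.1 hl).1)).le _) hinter hm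
    _ = _ := by rw [card_product]

lemma card_linearSolutions_self_le (hA : ∀ a ∈ A, 0 < a) (hα : 0 < α) (hβ : β ≠ 0)
    (hm : #A ≤ m ^ 3) : #(linearSolutions A A A α β) ≤ 4 * m ^ 2 * #(A / A) := by
  obtain rfl | hne := A.eq_empty_or_nonempty
  · simp [linearSolutions]
  have hm0 : 0 < m := Nat.pos_of_ne_zero (by rintro rfl; simp_all)
  have hAD : #A ≤ #(A / A) := card_le_card_div_self fun h ↦ (hA 0 h).false
  have hbound : #(linearSolutions A A A α β) ≤
      #A * (#(A / A) / m + #A / m + 1) + #(A / A) * m ^ 2 := by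
    refine Nat.le_of_mul_le_mul_left ?_ hne.card_pos
    linarith [card_mul_card_linearSolutions_le A A hA hα hβ hm0]
  have hquot : #A * (#(A / A) / m) ≤ m ^ 2 * #(A / A) := calc
    #A * (#(A / A) / m) ≤ m ^ 3 * (#(A / A) / m) := by gcongr
    _ = m ^ 2 * (m * (#(A / A) / m)) := by ring
    _ ≤ m ^ 2 * #(A / A) := by gcongr; exact Nat.mul_div_le _ _
  calc #(linearSolutions A A A α β)
      ≤ #A * (#(A / A) / m + #(A / A) / m + 1) + #(A / A) * m ^ 2 := by
        refine hbound.trans ?_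
        gcongr
    _ = 2 * (#A * (#(A / A) / m)) + #A + m ^ 2 * #(A / A) := by ring
    _ ≤ 2 * (m ^ 2 * #(A / A)) + m ^ 2 * #(A / A) + m ^ 2 * #(A / A) := by
        gcongr
        exact hAD.trans (Nat.le_mul_of_pos_left _ (by positivity))
    _ = 4 * m ^ 2 * #(A / A) := by ring

end LinearSolutions

section VectorSums

variable {K : Type*} [Field K] [DecidableEq K] {A : Finset K} {d : K → K}

/-- The sums `x (d r, r d r) + y (d s, s d s)` with `x, y ∈ A` of a vector on the line of slope `r`
and one on the line of slope `s`. For a slope `r ∈ A / A` the number `d r` is a denominator of `r`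
in `A`, so that `(d r, r d r) ∈ A × A`. -/
def vectorSums (A : Finset K) (d : K → K) (r s : K) : Finset (K × K) :=
  image₂ (fun x y ↦ (d r * x + d s * y, r * (d r * x) + s * (d s * y))) A A

/-- The union of `vectorSums A d r s` over all slopes `r ∈ R` and `s ∈ S`. -/
def clusterSums (A : Finset K) (d : K → K) (R S : Finset K) : Finset (K × K) :=
  (R ×ˢ S).biUnion fun t ↦ vectorSums A d t.1 t.2

lemma vectorSums_comm (A : Finset K) (d : K → K) (r s : K) :
    vectorSums A d r s = vectorSums A d s r := by
  rw [vectorSums, image₂_swap, vectorSums]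
  simp only [add_comm]

lemma clusterSums_subset {R S : Finset K}
    (hR : ∀ r ∈ R, d r ∈ A ∧ r * d r ∈ A) (hS : ∀ s ∈ S, d s ∈ A ∧ s * d s ∈ A) :
    clusterSums A d R S ⊆ (A * A + A * A) ×ˢ (A * A + A * A) := by
  refine biUnion_subset.2 fun t ht ↦ image₂_subset_iff.2 fun x hx y hy ↦ ?_
  obtain ⟨hr, hs⟩ := mem_product.1 ht
  rw [mem_product, ← mul_assoc, ← mul_assoc]
  exact ⟨add_mem_add (mul_mem_mul (hR _ hr).1 hx) (mul_mem_mul (hS _ hs).1 hy),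
    add_mem_add (mul_mem_mul (hR _ hr).2 hx) (mul_mem_mul (hS _ hs).2 hy)⟩

end VectorSums

section Clusters

variable {K : Type*} [Field K] [LinearOrder K] [IsStrictOrderedRing K] {A : Finset K} {d : K → K}

lemma exists_denominators (hA : ∀ a ∈ A, 0 < a) :
    ∃ d : K → K, (∀ r, 0 < d r) ∧ ∀ r ∈ A / A, d r ∈ A ∧ r * d r ∈ A := by
  have hr (r : K) : ∃ b, 0 < b ∧ (r ∈ A / A → b ∈ A ∧ r * b ∈ A) := by
    by_cases hr : r ∈ A / A
    · obtain ⟨a, ha, b, hb, rfl⟩ := mem_div.1 hr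
      exact ⟨b, hA b hb, fun _ ↦ ⟨hb, by rwa [div_mul_cancel₀ a (hA b hb).ne']⟩⟩
    · exact ⟨1, one_pos, fun h ↦ absurd h hr⟩
  choose d hd using hr
  exact ⟨d, fun r ↦ (hd r).1, fun r ↦ (hd r).2⟩

lemma card_vectorSums (A : Finset K) (hd : ∀ r, 0 < d r) {r s : K} (hrs : r ≠ s) :
    #(vectorSums A d r s) = #A ^ 2 := by
  rw [vectorSums, card_image₂, sq]
  intro x x' y y' h
  obtain ⟨h₁, h₂⟩ := Prod.mk.inj h
  have hx : (r - s) * d r ≠ 0 := mul_ne_zero (sub_ne_zero.2 hrs) (hd r).ne'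
  have hy : (s - r) * d s ≠ 0 := mul_ne_zero (sub_ne_zero.2 hrs.symm) (hd s).ne'
  exact ⟨mul_left_cancel₀ hx (by linear_combination h₂ - s * h₁),
    mul_left_cancel₀ hy (by linear_combination h₂ - r * h₁)⟩

lemma slope_bounds_of_mem_vectorSums (hA : ∀ a ∈ A, 0 < a) (hd : ∀ r, 0 < d r) {r s : K}
    (hrs : r < s) {z : K × K} (hz : z ∈ vectorSums A d r s) :
    0 < z.1 ∧ r * z.1 < z.2 ∧ z.2 < s * z.1 := by
  obtain ⟨x, hx, y, hy, rfl⟩ := mem_image₂.1 hz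
  have hdx : 0 < d r * x := mul_pos (hd r) (hA x hx)
  have hdy : 0 < d s * y := mul_pos (hd s) (hA y hy)
  refine ⟨add_pos hdx hdy, ?_, ?_⟩
  · linarith [mul_lt_mul_of_pos_right hrs hdy]
  · linarith [mul_lt_mul_of_pos_right hrs hdx]

-- Subtracting `r` times the first coordinate from the second eliminates one of the four summands
-- of a common point and expresses another as a positive combination of the remaining two.
lemma card_vectorSums_inter_le (hd : ∀ r, 0 < d r) {n : ℕ}
    (hn : ∀ α β : K, 0 < α → 0 < β → #(linearSolutions A A A α β) ≤ n) {r s r' s' : K}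
    (hr' : 0 < (r' - r) / (s - r)) (hs' : 0 < (s' - r) / (s - r)) :
    #(vectorSums A d r s ∩ vectorSums A d r' s') ≤ n := by
  have hsr : s - r ≠ 0 := by
    intro h
    simp [h] at hr'
  have hds := (hd s).ne'
  let α := (r' - r) / (s - r) * (d r' / d s)
  let β := (s' - r) / (s - r) * (d s' / d s)
  have hsub : vectorSums A d r s ∩ vectorSums A d r' s' ⊆ (linearSolutions A A A α β).image
      fun p ↦ (d r' * p.1 + d s' * p.2, r' * (d r' * p.1) + s' * (d s' * p.2)) := by
    intro z hz
    obtain ⟨hz, hz'⟩ := mem_inter.1 hz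
    obtain ⟨x, -, y, hy, rfl⟩ := mem_image₂.1 hz
    obtain ⟨x', hx', y', hy', heq⟩ := mem_image₂.1 hz'
    obtain ⟨h₁, h₂⟩ := Prod.mk.inj heq
    have hy_eq : α * x' + β * y' = y := by
      simp only [α, β]
      field_simp
      linear_combination h₂ - r * h₁
    exact mem_image.2 ⟨(x', y'), mem_filter.2 ⟨mem_product.2 ⟨hx', hy'⟩, hy_eq ▸ hy⟩, heq⟩
  calc _ ≤ #(linearSolutions A A A α β) := (card_le_card hsub).trans card_image_le
    _ ≤ n := hn α β (mul_pos hr' (div_pos (hd r') (hd s))) (mul_pos hs' (div_pos (hd s') (hd s)))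

lemma card_vectorSums_inter_le_of_ne (hd : ∀ r, 0 < d r) {n : ℕ}
    (hn : ∀ α β : K, 0 < α → 0 < β → #(linearSolutions A A A α β) ≤ n) {r s r' s' : K}
    (hrs : r < s) (hrs' : r < s') (hr's : r' < s) (hr's' : r' < s') (hne : (r, s) ≠ (r', s')) :
    #(vectorSums A d r s ∩ vectorSums A d r' s') ≤ n := by
  wlog hlt : r < r' ∨ r = r' ∧ s' < s generalizing r s r' s'
  · rw [inter_comm]
    refine this hr's' hr's hrs' hrs hne.symm ?_
    grind
  rcases hlt with hr | ⟨rfl, hs⟩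
  · exact card_vectorSums_inter_le hd hn (div_pos (sub_pos.2 hr) (sub_pos.2 hrs))
      (div_pos (sub_pos.2 hrs') (sub_pos.2 hrs))
  · rw [vectorSums_comm A d r s]
    exact card_vectorSums_inter_le hd hn
      (div_pos_of_neg_of_neg (sub_neg.2 hrs) (sub_neg.2 hrs))
      (div_pos_of_neg_of_neg (sub_neg.2 hs) (sub_neg.2 hrs))

lemma card_mul_card_mul_sq_le_card_clusterSums (hd : ∀ r, 0 < d r) {n : ℕ}
    (hn : ∀ α β : K, 0 < α → 0 < β → #(linearSolutions A A A α β) ≤ n) {R S : Finset K}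
    (hRS : ∀ r ∈ R, ∀ s ∈ S, r < s) :
    #R * #S * #A ^ 2 ≤ #(clusterSums A d R S) + #R * #S * (#R * #S - 1) * n := by
  rw [← card_product]
  refine card_mul_le_card_biUnion_add (fun t ht ↦ ?_) fun t ht u hu hne ↦ ?_
  · obtain ⟨hr, hs⟩ := mem_product.1 ht
    exact (card_vectorSums A hd (hRS _ hr _ hs).ne).ge
  · obtain ⟨hr, hs⟩ := mem_product.1 (mem_coe.1 ht)
    obtain ⟨hr', hs'⟩ := mem_product.1 (mem_coe.1 hu)
    exact card_vectorSums_inter_le_of_ne hd hn (hRS _ hr _ hs) (hRS _ hr _ hs') (hRS _ hr' _ hs)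
      (hRS _ hr' _ hs') hne

lemma disjoint_clusterSums (hA : ∀ a ∈ A, 0 < a) (hd : ∀ r, 0 < d r) {R S R' S' : Finset K}
    (hRS : ∀ r ∈ R, ∀ s ∈ S, r < s) (hSR' : ∀ s ∈ S, ∀ r ∈ R', s < r)
    (hRS' : ∀ r ∈ R', ∀ s ∈ S', r < s) :
    Disjoint (clusterSums A d R S) (clusterSums A d R' S') := by
  refine Finset.disjoint_left.2 fun z hz hz' ↦ ?_
  obtain ⟨t, ht, hz⟩ := mem_biUnion.1 hz
  obtain ⟨u, hu, hz'⟩ := mem_biUnion.1 hz'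
  obtain ⟨hr, hs⟩ := mem_product.1 ht
  obtain ⟨hr', hs'⟩ := mem_product.1 hu
  obtain ⟨hpos, -, hupper⟩ := slope_bounds_of_mem_vectorSums hA hd (hRS _ hr _ hs) hz
  obtain ⟨-, hlower, -⟩ := slope_bounds_of_mem_vectorSums hA hd (hRS' _ hr' _ hs') hz'
  have hslopes : t.2 * z.1 < u.1 * z.1 := mul_lt_mul_of_pos_right (hSR' _ hs _ hr') hpos
  exact (hupper.trans (hslopes.trans hlower)).false

lemma mul_sq_mul_sq_card_le (hA : ∀ a ∈ A, 0 < a) {n M B : ℕ}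
    (hn : ∀ α β : K, 0 < α → 0 < β → #(linearSolutions A A A α β) ≤ n) (hM : 0 < M)
    (hB : B * (2 * M) ≤ #(A / A)) :
    B * (M ^ 2 * #A ^ 2) ≤ #(A * A + A * A) ^ 2 + B * (M ^ 2 * (M ^ 2 - 1) * n) := by
  obtain ⟨d, hd, hdA⟩ := exists_denominators hA
  let Q (k : ℕ) := block (A / A) M k
  let U (b : ℕ) := clusterSums A d (Q (2 * b)) (Q (2 * b + 1))
  have hlt {k l : ℕ} (hkl : k < l) : ∀ r ∈ Q k, ∀ s ∈ Q l, r < s := fun _ hr _ hs ↦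
    lt_of_mem_block hkl hr hs
  have hQ (k : ℕ) : ∀ r ∈ Q k, d r ∈ A ∧ r * d r ∈ A := fun r hr ↦ hdA r (mem_filter.1 hr).1
  have hcardQ {k : ℕ} (hk : k < 2 * B) : #(Q k) = M :=
    card_block _ hM <| (Nat.mul_le_mul_right M hk).trans (by linarith)
  have hcardU : ∀ b ∈ range B, M ^ 2 * #A ^ 2 ≤ #(U b) + M ^ 2 * (M ^ 2 - 1) * n := by
    intro b hb
    have hb := mem_range.1 hb
    have := card_mul_card_mul_sq_le_card_clusterSums hd hn
      (hlt (Nat.lt_succ_self (2 * b)))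
    rwa [hcardQ (by omega), hcardQ (by omega), ← sq] at this
  have hdisj : ((range B : Finset ℕ) : Set ℕ).PairwiseDisjoint U := by
    have hlt_disj {b c : ℕ} (hbc : b < c) : Disjoint (U b) (U c) :=
      disjoint_clusterSums hA hd (hlt (by omega)) (hlt (by omega)) (hlt (by omega))
    intro b _ c _ hne
    exact hne.lt_or_gt.elim hlt_disj fun h ↦ (hlt_disj h).symm
  have hsum : ∑ b ∈ range B, #(U b) ≤ #(A * A + A * A) ^ 2 := by
    rw [← card_biUnion hdisj, sq, ← card_product]
    exact card_le_card (biUnion_subset.2 fun b _ ↦ clusterSums_subset (hQ _) (hQ _))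
  calc B * (M ^ 2 * #A ^ 2) = ∑ _b ∈ range B, M ^ 2 * #A ^ 2 := by simp
    _ ≤ ∑ b ∈ range B, (#(U b) + M ^ 2 * (M ^ 2 - 1) * n) := sum_le_sum hcardU
    _ = ∑ b ∈ range B, #(U b) + B * (M ^ 2 * (M ^ 2 - 1) * n) := by
        rw [sum_add_distrib, sum_const, card_range, smul_eq_mul]
    _ ≤ _ := by gcongr

lemma card_div_mul_mul_sq_le (hA : ∀ a ∈ A, 0 < a) {n M : ℕ}
    (hn : ∀ α β : K, 0 < α → 0 < β → #(linearSolutions A A A α β) ≤ n) (hM : 0 < M)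
    (hMD : 2 * M ≤ #(A / A)) (hoverlap : 2 * ((M ^ 2 - 1) * n) ≤ #A ^ 2) :
    #(A / A) * M * #A ^ 2 ≤ 8 * #(A * A + A * A) ^ 2 := by
  set D := #(A / A)
  set T := #(A * A + A * A)
  obtain ⟨B, hB⟩ : ∃ B, B = D / (2 * M) := ⟨_, rfl⟩
  have hBpos : 1 ≤ B := hB ▸ (Nat.one_le_div_iff (by omega)).2 hMD
  have hD : D ≤ 4 * (B * M) := by
    have : D < 2 * M * (B + 1) := hB ▸ Nat.lt_mul_div_succ D (by omega)
    nlinarith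
  have hmain : B * (M ^ 2 * #A ^ 2) ≤ T ^ 2 + B * (M ^ 2 * (M ^ 2 - 1) * n) :=
    mul_sq_mul_sq_card_le hA hn hM (hB ▸ Nat.div_mul_le_self D (2 * M))
  have hhalf : 2 * (B * (M ^ 2 * (M ^ 2 - 1) * n)) ≤ B * (M ^ 2 * #A ^ 2) := calc
    2 * (B * (M ^ 2 * (M ^ 2 - 1) * n)) = B * (M ^ 2 * (2 * ((M ^ 2 - 1) * n))) := by ring
    _ ≤ B * (M ^ 2 * #A ^ 2) := by gcongr
  calc D * M * #A ^ 2 ≤ 4 * (B * M) * M * #A ^ 2 := by gcongr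
    _ = 4 * (B * (M ^ 2 * #A ^ 2)) := by ring
    _ ≤ 8 * T ^ 2 := by omega

end Clusters

section Parameters

lemma exists_cube_between {N : ℕ} (hN : 0 < N) : ∃ m, N ≤ m ^ 3 ∧ m ^ 3 ≤ 8 * N := by
  have hpos : 1 ≤ Nat.nthRoot 3 N := (Nat.le_nthRoot_iff three_ne_zero).2 (by simpa)
  refine ⟨Nat.nthRoot 3 N + 1, (Nat.lt_pow_nthRoot_add_one three_ne_zero N).le, ?_⟩
  calc (Nat.nthRoot 3 N + 1) ^ 3 ≤ (2 * Nat.nthRoot 3 N) ^ 3 := by gcongr; omega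
    _ = 8 * Nat.nthRoot 3 N ^ 3 := by ring
    _ ≤ 8 * N := by gcongr; exact Nat.pow_nthRoot_le_iff.2 (.inl three_ne_zero)

lemma exists_cluster_size (N : ℕ) {n : ℕ} (hn : 0 < n) :
    ∃ M, 0 < M ∧ 2 * ((M ^ 2 - 1) * n) ≤ N ∧ N ≤ 6 * (M ^ 2 * n) := by
  obtain ⟨q, hq⟩ : ∃ q, q = N / (2 * n) := ⟨_, rfl⟩
  obtain ⟨M, hM⟩ : ∃ M, M = Nat.sqrt (q + 1) := ⟨_, rfl⟩
  have hpos : 0 < M := hM ▸ Nat.sqrt_pos.2 q.succ_pos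
  have hle : M ^ 2 - 1 ≤ q := Nat.sub_le_of_le_add (hM ▸ Nat.sqrt_le' (q + 1))
  have hlt : q + 1 < (M + 1) ^ 2 := hM ▸ Nat.lt_succ_sqrt' (q + 1)
  refine ⟨M, hpos, ?_, ?_⟩
  · calc 2 * ((M ^ 2 - 1) * n) ≤ 2 * (q * n) := by gcongr
      _ = q * (2 * n) := by ring
      _ ≤ N := hq ▸ Nat.div_mul_le_self N (2 * n)
  · have hq3 : q + 1 ≤ 3 * M ^ 2 := by nlinarith
    calc N ≤ 2 * n * (q + 1) := hq ▸ (Nat.lt_mul_div_succ N (by omega)).le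
      _ ≤ 2 * n * (3 * M ^ 2) := by gcongr
      _ = 6 * (M ^ 2 * n) := by ring

lemma two_mul_le_of_overlap_le {N D M k : ℕ} (hND : N ≤ D) (hD : 2 ≤ D) (hk : 0 < k)
    (hoverlap : 2 * ((M ^ 2 - 1) * (4 * k * D)) ≤ N ^ 2) : 2 * M ≤ D := by
  have hD8 : 8 * (M ^ 2 - 1) ≤ D := by
    refine Nat.le_of_mul_le_mul_right ?_ (by omega : 0 < D)
    calc 8 * (M ^ 2 - 1) * D = 2 * ((M ^ 2 - 1) * (4 * 1 * D)) := by ring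
      _ ≤ 2 * ((M ^ 2 - 1) * (4 * k * D)) := by gcongr; omega
      _ ≤ N ^ 2 := hoverlap
      _ ≤ D * D := by rw [sq]; gcongr
  rcases le_or_gt M 1 with hM | hM
  · omega
  · have : 2 * M ≤ M ^ 2 := by nlinarith
    omega

lemma pow_le_of_parameters {N D m M T : ℕ} (hN : 0 < N) (hND : N ≤ D) (hm : m ^ 3 ≤ 8 * N)
    (hT : D * M * N ^ 2 ≤ 8 * T ^ 2) (hM : N ^ 2 ≤ 24 * (M ^ 2 * m ^ 2 * D)) :
    N ^ 19 ≤ 3 ^ 3 * 2 ^ 33 * T ^ 12 := by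
  have hN7 : N ^ 7 ≤ 1536 * (m ^ 2 * T ^ 4) := calc
    N ^ 7 = N ^ 2 * (N * N ^ 4) := by ring
    _ ≤ 24 * (M ^ 2 * m ^ 2 * D) * (D * N ^ 4) := by gcongr
    _ = 24 * m ^ 2 * (D * M * N ^ 2) ^ 2 := by ring
    _ ≤ 24 * m ^ 2 * (8 * T ^ 2) ^ 2 := by gcongr
    _ = 1536 * (m ^ 2 * T ^ 4) := by ring
  refine Nat.le_of_mul_le_mul_right ?_ (pow_pos hN 2)
  calc N ^ 19 * N ^ 2 = (N ^ 7) ^ 3 := by ring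
    _ ≤ (1536 * (m ^ 2 * T ^ 4)) ^ 3 := by gcongr
    _ = 1536 ^ 3 * T ^ 12 * (m ^ 3) ^ 2 := by ring
    _ ≤ 1536 ^ 3 * T ^ 12 * (8 * N) ^ 2 := by gcongr
    _ = 3 ^ 3 * 2 ^ 33 * T ^ 12 * N ^ 2 := by ring

end Parameters

section CardPow

variable {K : Type*} [Field K] [LinearOrder K] [IsStrictOrderedRing K]

theorem card_pow_le_of_pos {A : Finset K} (hA : ∀ a ∈ A, 0 < a) :
    #A ^ 19 ≤ 3 ^ 3 * 2 ^ 33 * #(A * A + A * A) ^ 12 := by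
  rcases le_or_gt #A 1 with hcard | hcard
  · exact (card_pow_le_of_card_le_one hcard).trans (Nat.le_mul_of_pos_left _ (by norm_num))
  have hAD : #A ≤ #(A / A) := card_le_card_div_self fun h ↦ (hA 0 h).false
  obtain ⟨m, hNm, hmN⟩ := exists_cube_between (by omega : 0 < #A)
  have hm : 0 < m := Nat.pos_of_ne_zero (by rintro rfl; omega)
  have hsolutions (α β : K) (hα : 0 < α) (hβ : 0 < β) :
      #(linearSolutions A A A α β) ≤ 4 * m ^ 2 * #(A / A) :=
    card_linearSolutions_self_le hA hα hβ.ne' hNm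
  obtain ⟨M, hM, hoverlap, hN⟩ := exists_cluster_size (#A ^ 2) (n := 4 * m ^ 2 * #(A / A))
    (Nat.mul_pos (by positivity) (by omega))
  have hMD : 2 * M ≤ #(A / A) := two_mul_le_of_overlap_le hAD (by omega) (pow_pos hm 2) hoverlap
  refine pow_le_of_parameters (by omega) hAD hmN
    (card_div_mul_mul_sq_le hA hsolutions hM hMD hoverlap) ?_
  linarith

lemma exists_pos_card_le (A : Finset K) :
    ∃ P : Finset K, (∀ a ∈ P, 0 < a) ∧ #A ≤ 2 * #P + 1 ∧ P * P ⊆ A * A := by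
  set pos := {a ∈ A | 0 < a} with hpos
  set neg := {a ∈ A | a < 0} with hneg
  have hcard : #A ≤ #pos + #neg + 1 := by
    have hcover : A ⊆ pos ∪ neg ∪ {0} := by
      intro a ha
      simp only [hpos, hneg, mem_union, mem_filter, mem_singleton]
      grind
    have := card_le_card hcover
    have := card_union_le (pos ∪ neg) {0}
    have := card_union_le pos neg
    simp only [card_singleton] at *
    omega
  rcases le_total #neg #pos with h | h
  · exact ⟨pos, fun a ha ↦ (mem_filter.1 ha).2, by omega,
      mul_subset_mul (filter_subset _ _) (filter_subset _ _)⟩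
  · refine ⟨-neg, fun a ha ↦ ?_, by rw [card_neg]; omega, ?_⟩
    · exact neg_lt_zero.1 (mem_filter.1 (mem_neg'.1 ha)).2
    · rw [neg_mul_neg]
      exact mul_subset_mul (filter_subset _ _) (filter_subset _ _)

theorem card_pow_le (A : Finset K) : #A ^ 19 ≤ 3 ^ 22 * 2 ^ 33 * #(A * A + A * A) ^ 12 := by
  rcases le_or_gt #A 1 with hcard | hcard
  · exact (card_pow_le_of_card_le_one hcard).trans (Nat.le_mul_of_pos_left _ (by norm_num))
  obtain ⟨P, hP, hAP, hsub⟩ := exists_pos_card_le A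
  calc #A ^ 19 ≤ (3 * #P) ^ 19 := by gcongr; omega
    _ = 3 ^ 19 * #P ^ 19 := by ring
    _ ≤ 3 ^ 19 * (3 ^ 3 * 2 ^ 33 * #(P * P + P * P) ^ 12) := by gcongr; exact card_pow_le_of_pos hP
    _ ≤ 3 ^ 19 * (3 ^ 3 * 2 ^ 33 * #(A * A + A * A) ^ 12) := by gcongr
    _ = 3 ^ 22 * 2 ^ 33 * #(A * A + A * A) ^ 12 := by ring

end CardPow

end SumOfProducts

theorem stmt_2_general.{u} :
    ∃ c : ℝ, 0 < c ∧
      ∀ (K : Type u) [Field K] [LinearOrder K] [IsStrictOrderedRing K] (A : Finset K),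
        c * (#A : ℝ) ^ ((19 : ℝ) / 12) ≤ (#(A * A + A * A) : ℝ) := by
  refine ⟨1 / 100, by norm_num, fun K _ _ _ A ↦ ?_⟩
  have hpow : ((#A : ℝ) ^ ((19 : ℝ) / 12)) ^ 12 = (#A : ℝ) ^ 19 := by
    rw [← Real.rpow_mul_natCast (by positivity), ← Real.rpow_natCast]
    norm_num
  have hcard : (#A : ℝ) ^ 19 ≤ 3 ^ 22 * 2 ^ 33 * (#(A * A + A * A) : ℝ) ^ 12 :=
    mod_cast SumOfProducts.card_pow_le A
  refine le_of_pow_le_pow_left₀ (n := 12) (by norm_num) (by positivity) ?_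
  calc (1 / 100 * (#A : ℝ) ^ ((19 : ℝ) / 12)) ^ 12 = (1 / 100) ^ 12 * (#A : ℝ) ^ 19 := by
        rw [mul_pow, hpow]
    _ ≤ (1 / 100) ^ 12 * (3 ^ 22 * 2 ^ 33 * (#(A * A + A * A) : ℝ) ^ 12) := by gcongr
    _ = (1 / 100) ^ 12 * (3 ^ 22 * 2 ^ 33) * (#(A * A + A * A) : ℝ) ^ 12 := by ring
    _ ≤ (#(A * A + A * A) : ℝ) ^ 12 := mul_le_of_le_one_left (by positivity) (by norm_num)

theorem stmt_2 :
    ∃ c : ℝ, 0 < c ∧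
      ∀ A : Finset ℝ, (0 : ℝ) ∉ A → 2 ≤ A.card →
        c * (A.card : ℝ) ^ ((19 : ℝ) / 12) ≤ ((A * A + A * A).card : ℝ) := by
  obtain ⟨c, hc, hbound⟩ := stmt_2_general
  exact ⟨c, hc, fun A _ _ ↦ hbound ℝ A⟩
end
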